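/- (ℬ, ⋆, ε, Δ, ε*) is a Hopf algebra: it is a bialgebra, and there exists a ℂ-linear map S : ℬ → ℬ (an antipode) such that μ ∘ (S ⊗ id) ∘ Δ = η ∘ ε* = μ ∘ (id ⊗ S) ∘ Δ, where μ : ℬ ⊗ ℬ → ℬ is the linear map induced by ⋆ and η : ℂ → ℬ sends 1 to the empty B-diagram ε. -/

import Mathlib

open scoped BigOperators

structure BD where
  lam : List ℕ
  up : Finset ℕ
  dn : Finset ℕ
  ed : Finset (ℕ × ℕ)
deriving DecidableEq

namespace BD

/-- number of vertices -/
def nv (G : BD) : ℕ := G.lam.length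

/-- number of half-edges -/
def omega (G : BD) : ℕ := G.lam.sum

/-- the vertex to which a half-edge belongs -/
def v (G : BD) (k : ℕ) : ℕ :=
  (List.range G.lam.length).countP (fun i => (G.lam.take i).sum < k)

def Valid (G : BD) : Prop :=
  (∀ x ∈ G.lam, 0 < x) ∧
  G.up ⊆ Finset.Icc 1 G.omega ∧
  G.dn ⊆ Finset.Icc 1 G.omega ∧
  (∀ p ∈ G.ed, p.1 ∈ G.up ∧ p.2 ∈ G.dn ∧ G.v p.1 < G.v p.2) ∧
  (∀ p ∈ G.ed, ∀ q ∈ G.ed, p.1 = q.1 → p = q) ∧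
  (∀ p ∈ G.ed, ∀ q ∈ G.ed, p.2 = q.2 → p = q)

def eps : BD := ⟨[], ∅, ∅, ∅⟩

theorem eps_valid : eps.Valid := by
  refine ⟨?_, ?_, ?_, ?_, ?_, ?_⟩ <;> simp [eps, Valid, omega]

def HfUp (G : BD) : Finset ℕ := G.up \ G.ed.image Prod.fst
def HfDn (G : BD) : Finset ℕ := G.dn \ G.ed.image Prod.snd
def hfUp (G : BD) : ℕ := G.HfUp.card
def hfDn (G : BD) : ℕ := G.HfDn.card
def hc (G : BD) : ℕ :=
  (G.omega - G.ed.card - G.hfUp) + (G.omega - G.ed.card - G.hfDn)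

/-- composition of `G'` over `G` along a matching `s` -/
def comp (G G' : BD) (s : Finset (ℕ × ℕ)) : BD where
  lam := G.lam ++ G'.lam
  up := G.up ∪ G'.up.image (· + G.omega)
  dn := G.dn ∪ G'.dn.image (· + G.omega)
  ed := G.ed ∪ s.image (fun p => (p.1, p.2 + G.omega)) ∪
        G'.ed.image (fun p => (p.1 + G.omega, p.2 + G.omega))

/-- `s` encodes a strictly increasing sequence `a₁ < ⋯ < a_k` of elements of `H_f↑(G)`
matched with pairwise distinct elements `b₁,…,b_k` of `H_f↓(G')`. -/
def Matching (G G' : BD) (s : Finset (ℕ × ℕ)) : Prop :=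
  (∀ p ∈ s, p.1 ∈ G.HfUp ∧ p.2 ∈ G'.HfDn) ∧
  (∀ p ∈ s, ∀ q ∈ s, p.1 = q.1 → p = q) ∧
  (∀ p ∈ s, ∀ q ∈ s, p.2 = q.2 → p = q)

open scoped Classical in
noncomputable def matchings (G G' : BD) : Finset (Finset (ℕ × ℕ)) :=
  (G.HfUp ×ˢ G'.HfDn).powerset.filter (fun s => Matching G G' s)

/-- juxtaposition -/
def juxt (G G' : BD) : BD := comp G G' ∅

def Indiv (G : BD) : Prop :=
  ∀ G₁ G₂ : BD, G₁.Valid → G₂.Valid → G = juxt G₁ G₂ → G₁ = G ∨ G₂ = G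

/-- half-edges attached to the vertices in `I` -/
def HI (G : BD) (I : Finset ℕ) : Finset ℕ :=
  (Finset.Icc 1 G.omega).filter (fun k => G.v k ∈ I)

/-- the increasing relabelling bijection -/
def phi (G : BD) (I : Finset ℕ) (k : ℕ) : ℕ := ((G.HI I).filter (· ≤ k)).card

/-- sub-B-diagram on the set of vertices `I` -/
def sub (G : BD) (I : Finset ℕ) : BD where
  lam := ((List.range G.lam.length).filter (fun i => i + 1 ∈ I)).map (fun i => G.lam.getD i 0)
  up := (G.up ∩ G.HI I).image (G.phi I)
  dn := (G.dn ∩ G.HI I).image (G.phi I)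
  ed := (G.ed.filter (fun p => G.v p.1 ∈ I ∧ G.v p.2 ∈ I)).image
          (fun p => (G.phi I p.1, G.phi I p.2))

def Isolated (G : BD) (I : Finset ℕ) : Prop :=
  ∀ p ∈ G.ed, (G.v p.1 ∈ I ↔ G.v p.2 ∈ I)

def Connected (G : BD) : Prop :=
  ∀ i j : ℕ, 1 ≤ i → i < j → j ≤ G.nv →
    ∃ (k : ℕ) (c : Fin (k + 1) → ℕ × ℕ),
      (∀ ℓ, c ℓ ∈ G.ed) ∧
      (i = G.v (c 0).1 ∨ i = G.v (c 0).2) ∧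
      (j = G.v (c (Fin.last k)).1 ∨ j = G.v (c (Fin.last k)).2) ∧
      ∀ ℓ : Fin k,
        G.v (c ℓ.castSucc).1 = G.v (c ℓ.succ).1 ∨ G.v (c ℓ.castSucc).1 = G.v (c ℓ.succ).2 ∨
        G.v (c ℓ.castSucc).2 = G.v (c ℓ.succ).1 ∨ G.v (c ℓ.castSucc).2 = G.v (c ℓ.succ).2

def IsConnComp (G : BD) (I : Finset ℕ) : Prop :=
  I ⊆ Finset.Icc 1 G.nv ∧ I.Nonempty ∧ (G.sub I).Connected ∧
  ∀ J : Finset ℕ, I ⊆ J → J ⊆ Finset.Icc 1 G.nv → (G.sub J).Connected → J = I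

end BD

open scoped TensorProduct

/-- B-diagrams -/
abbrev BDiagram := {G : BD // G.Valid}

/-- the free `ℂ`-vector space on the set of B-diagrams -/
abbrev BSpace := BDiagram →₀ ℂ

open scoped Classical in
noncomputable def mkB (G : BD) : BSpace :=
  if h : G.Valid then Finsupp.single ⟨G, h⟩ 1 else 0

noncomputable def unitB : BSpace := Finsupp.single ⟨BD.eps, BD.eps_valid⟩ 1

noncomputable def liftB {V : Type*} [AddCommMonoid V] [Module ℂ V] (f : BDiagram → V) :
    BSpace →ₗ[ℂ] V :=
  Finsupp.lsum ℂ fun A => LinearMap.toSpanSingleton ℂ V (f A)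

noncomputable def mulfun (A B : BDiagram) : BSpace :=
  ∑ s ∈ BD.matchings A.1 B.1, mkB (BD.comp A.1 B.1 s)

/-- the product ⋆ of the algebra of B-diagrams, as a bilinear map -/
noncomputable def starB : BSpace →ₗ[ℂ] BSpace →ₗ[ℂ] BSpace :=
  liftB fun A => liftB fun B => mulfun A B

open scoped Classical in
/-- the coproduct evaluated on a B-diagram -/
noncomputable def dfun (A : BDiagram) : BSpace ⊗[ℂ] BSpace :=
  ∑ I ∈ (Finset.Icc 1 A.1.nv).powerset.filter (fun I => A.1.Isolated I),
    mkB (A.1.sub I) ⊗ₜ[ℂ] mkB (A.1.sub (Finset.Icc 1 A.1.nv \ I))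

/-- the coproduct Δ of ℬ -/
noncomputable def deltaL : BSpace →ₗ[ℂ] BSpace ⊗[ℂ] BSpace := liftB dfun

/-- the counit of ℬ -/
noncomputable def counitB : BSpace →ₗ[ℂ] ℂ :=
  liftB fun A => if A.1 = BD.eps then (1 : ℂ) else 0

/-- the product of ℬ as a linear map on the tensor square -/
noncomputable def muB : BSpace ⊗[ℂ] BSpace →ₗ[ℂ] BSpace := TensorProduct.lift starB

/-- the componentwise product `(x ⊗ y) ⋆ (x' ⊗ y') = (x ⋆ x') ⊗ (y ⋆ y')` on ℬ ⊗ ℬ -/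
noncomputable def star2 (x y : BSpace ⊗[ℂ] BSpace) : BSpace ⊗[ℂ] BSpace :=
  TensorProduct.map muB muB
    (TensorProduct.tensorTensorTensorComm ℂ BSpace BSpace BSpace BSpace (x ⊗ₜ[ℂ] y))

/-!
A product in `ℬ` is a sum over partial matchings between free outputs of one factor and free inputs
of the other. Both iterated products of `G`, `H`, `K` enumerate the same families of three pairwise
compatible matchings (`G`–`H`, `G`–`K` and `H`–`K`), which gives associativity. A set of vertices of
a composition is isolated exactly when it restricts to isolated sets of both factors and no new
edge crosses it, so the matching splits into two smaller ones; hence `Δ` is multiplicative.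
Coassociativity holds because both sides run over the partitions of the vertices into three isolated
sets. Finally `1 - id` is locally nilpotent for the convolution product: its `k`-th power kills the
diagrams with fewer than `k` vertices, as it vanishes on `ε` and `Δ` distributes the vertices over
its two tensor factors. The antipode is the sum of the geometric series of `1 - id`.
-/

section

open Finset

section Rank

variable {α : Type*} [LinearOrder α] {s t : Finset α} {a b : α}

/-- The number of elements of `s` that are at most `a`. On `s` this is the increasing bijection onto
`{1, …, #s}`, so it expresses the relabellings of the paper. -/
def rankIn (s : Finset α) (a : α) : ℕ := #{x ∈ s | x ≤ a}

theorem rankIn_le_card (s : Finset α) (a : α) : rankIn s a ≤ #s := card_filter_le _ _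

theorem rankIn_pos (ha : a ∈ s) : 0 < rankIn s a :=
  card_pos.2 ⟨a, mem_filter.2 ⟨ha, le_rfl⟩⟩

theorem rankIn_strictMonoOn (s : Finset α) : StrictMonoOn (rankIn s) s := fun _ _ b hb hab ↦
  card_lt_card <| ssubset_iff_of_subset (monotone_filter_right _ fun _ _ h ↦ h.trans hab.le) |>.2
    ⟨b, mem_filter.2 ⟨hb, le_rfl⟩, fun h ↦ hab.not_ge (mem_filter.1 h).2⟩

theorem rankIn_le_rankIn_iff (ha : a ∈ s) : rankIn s a ≤ rankIn s b ↔ a ≤ b := by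
  refine ⟨fun h ↦ ?_, fun h ↦ card_le_card <| monotone_filter_right _ fun _ _ hx ↦ hx.trans h⟩
  by_contra! hlt
  exact h.not_gt <| card_lt_card <|
    ssubset_iff_of_subset (monotone_filter_right _ fun _ _ hx ↦ hx.trans hlt.le) |>.2
      ⟨a, mem_filter.2 ⟨ha, le_rfl⟩, fun hx ↦ hlt.not_ge (mem_filter.1 hx).2⟩

theorem image_rankIn (s : Finset α) : s.image (rankIn s) = Icc 1 #s := by
  refine eq_of_subset_of_card_le (image_subset_iff.2 fun a ha ↦
    mem_Icc.2 ⟨rankIn_pos ha, rankIn_le_card s a⟩) ?_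
  rw [card_image_of_injOn (rankIn_strictMonoOn s).injOn, Nat.card_Icc, Nat.add_sub_cancel]

theorem rankIn_mem_image_iff (hts : t ⊆ s) (ha : a ∈ s) :
    rankIn s a ∈ t.image (rankIn s) ↔ a ∈ t := by
  rw [← mem_coe, coe_image]
  exact (rankIn_strictMonoOn s).injOn.mem_image_iff (coe_subset.2 hts) ha

theorem rankIn_image_rankIn (hts : t ⊆ s) (b : α) :
    rankIn (t.image (rankIn s)) (rankIn s b) = rankIn t b := by
  rw [rankIn, filter_image, card_image_of_injOn, rankIn]
  · exact congrArg card (filter_congr fun a ha ↦ rankIn_le_rankIn_iff (hts ha))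
  · exact (rankIn_strictMonoOn s).injOn.mono fun a ha ↦ hts (mem_filter.1 ha).1

theorem rankIn_Icc {n k : ℕ} (hk : k ≤ n) : rankIn (Icc 1 n) k = k := by
  have : {x ∈ Icc 1 n | x ≤ k} = Icc 1 k := by ext; simp; lia
  rw [rankIn, this, Nat.card_Icc, Nat.add_sub_cancel]

end Rank

section Glue

variable {m n k : ℕ} {X Y X' Y' : Finset ℕ}

/-- `X ∪ (Y + m)`: the subset of `{1, …, m + n}` obtained by placing `Y ⊆ {1, …, n}` after
`X ⊆ {1, …, m}`. It describes how compositions of diagrams number half-edges and vertices. -/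
def glue (m : ℕ) (X Y : Finset ℕ) : Finset ℕ := X ∪ Y.image (· + m)

theorem mem_glue_of_le (hY : 0 ∉ Y) (hk : k ≤ m) : k ∈ glue m X Y ↔ k ∈ X := by
  simp only [glue, mem_union, mem_image, or_iff_left_iff_imp]
  rintro ⟨y, hy, rfl⟩
  obtain rfl : y = 0 := by lia
  exact absurd hy hY

theorem add_mem_glue (hX : X ⊆ Icc 1 m) (hk : 0 < k) : k + m ∈ glue m X Y ↔ k ∈ Y := by
  have : k + m ∉ X := fun h ↦ by have := mem_Icc.1 (hX h); lia
  simp [glue, this]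

theorem zero_notMem_of_subset_Icc (hX : X ⊆ Icc 1 m) : 0 ∉ X := fun h ↦ by
  simpa using hX h

theorem glue_Icc (m n : ℕ) : glue m (Icc 1 m) (Icc 1 n) = Icc 1 (m + n) := by
  ext k
  simp only [glue, mem_union, mem_image, mem_Icc]
  exact ⟨by grind, fun h ↦ (le_or_gt k m).imp (by lia) fun hk ↦ ⟨k - m, by lia, by lia⟩⟩

theorem glue_subset_Icc (hX : X ⊆ Icc 1 m) (hY : Y ⊆ Icc 1 n) : glue m X Y ⊆ Icc 1 (m + n) :=
  glue_Icc m n ▸ union_subset_union hX (image_subset_image hY)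

theorem disjoint_image_add (hX : X ⊆ Icc 1 m) (hY : 0 ∉ Y) : Disjoint X (Y.image (· + m)) := by
  rw [disjoint_right]
  simp only [mem_image, forall_exists_index, and_imp, forall_apply_eq_imp_iff₂]
  intro y hy h
  have := mem_Icc.1 (hX h)
  exact hY ((show y = 0 by lia) ▸ hy)

theorem rankIn_glue_of_le (hY : 0 ∉ Y) (hk : k ≤ m) : rankIn (glue m X Y) k = rankIn X k := by
  refine congrArg card (ext fun x ↦ ?_)
  simp only [mem_filter, and_congr_left_iff]
  exact fun hx ↦ mem_glue_of_le hY (hx.trans hk)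

theorem rankIn_glue_add (hX : X ⊆ Icc 1 m) (hY : 0 ∉ Y) (k : ℕ) :
    rankIn (glue m X Y) (k + m) = rankIn Y k + #X := by
  have hle : {x ∈ X | x ≤ k + m} = X :=
    filter_true_of_mem fun x hx ↦ by have := mem_Icc.1 (hX hx); lia
  rw [rankIn, glue, filter_union, filter_image, hle, card_union_of_disjoint, add_comm,
    card_image_of_injective _ (add_left_injective m)]
  · simp only [add_le_add_iff_right, rankIn]
  · exact (disjoint_image_add hX hY).mono_right (image_subset_image (filter_subset _ _))

theorem glue_sdiff_glue (hX : X ⊆ Icc 1 m) (hX' : X' ⊆ Icc 1 m) (hY : 0 ∉ Y) (hY' : 0 ∉ Y') :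
    glue m X Y \ glue m X' Y' = glue m (X \ X') (Y \ Y') := by
  rw [glue, glue, glue, union_sdiff_distrib, image_sdiff _ _ (add_left_injective m)]
  congr 1
  · rw [sdiff_union_distrib, (disjoint_image_add hX hY').sdiff_eq_left]
    exact inter_eq_left.2 sdiff_subset
  · rw [sdiff_union_distrib, (disjoint_image_add hX' hY).symm.sdiff_eq_left]
    exact inter_eq_right.2 sdiff_subset

theorem glue_assoc (m n : ℕ) (X Y Z : Finset ℕ) :
    glue (m + n) (glue m X Y) Z = glue m X (glue n Y Z) := by
  simp only [glue, image_union, image_image, union_assoc]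
  congr! 4
  simp only [Function.comp_apply]
  lia

end Glue

section Powerset

variable {α β M : Type*} [DecidableEq β] [AddCommMonoid M]

theorem sum_powerset_union [DecidableEq α] {s t : Finset α} (h : Disjoint s t) (F : Finset α → M) :
    ∑ u ∈ (s ∪ t).powerset, F u = ∑ a ∈ s.powerset, ∑ b ∈ t.powerset, F (a ∪ b) := by
  rw [← sum_product']
  symm
  refine sum_nbij' (fun p ↦ p.1 ∪ p.2) (fun u ↦ (u ∩ s, u ∩ t)) ?_ ?_ ?_ ?_ fun _ _ ↦ rfl
  · simp only [mem_product, mem_powerset]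
    exact fun p hp ↦ union_subset_union hp.1 hp.2
  · simp [inter_subset_right]
  · rintro ⟨a, b⟩ hp
    simp only [mem_product, mem_powerset] at hp
    have hbs : b ∩ s = ∅ := disjoint_iff_inter_eq_empty.1 (h.symm.mono_left hp.2)
    have hat : a ∩ t = ∅ := disjoint_iff_inter_eq_empty.1 (h.mono_left hp.1)
    simp only [union_inter_distrib_right, inter_eq_left.2 hp.1, inter_eq_left.2 hp.2, hbs, hat,
      union_empty, empty_union]
  · intro u hu
    rw [← inter_union_distrib_left, inter_eq_left.2 (mem_powerset.1 hu)]

theorem sum_powerset_image {s : Finset α} {f : α → β} (hf : Set.InjOn f s) (F : Finset β → M) :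
    ∑ u ∈ (s.image f).powerset, F u = ∑ t ∈ s.powerset, F (t.image f) := by
  rw [powerset_image, sum_image (image_injOn_powerset_of_injOn hf)]

theorem sum_powerset_Icc_add (m n : ℕ) (F : Finset ℕ → M) :
    ∑ K ∈ (Icc 1 (m + n)).powerset, F K =
      ∑ I ∈ (Icc 1 m).powerset, ∑ J ∈ (Icc 1 n).powerset, F (glue m I J) := by
  rw [← glue_Icc, glue, sum_powerset_union (disjoint_image_add subset_rfl (by simp))]
  exact sum_congr rfl fun I _ ↦ sum_powerset_image (add_left_injective m).injOn _

theorem sum_powerset_sum_powerset_comm [DecidableEq α] {p : Finset α → Prop} [DecidablePred p]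
    (hunion : ∀ {s t}, p s → p t → p (s ∪ t)) (hsdiff : ∀ {s t}, p s → p t → p (s \ t))
    (u : Finset α) (F : Finset α → Finset α → Finset α → M) :
    ∑ s ∈ u.powerset with p s, ∑ t ∈ s.powerset with p t, F t (s \ t) (u \ s) =
      ∑ t ∈ u.powerset with p t, ∑ r ∈ (u \ t).powerset with p r, F t r ((u \ t) \ r) := by
  rw [sum_sigma', sum_sigma']
  refine sum_bij' (fun x _ ↦ ⟨x.2, x.1 \ x.2⟩) (fun x _ ↦ ⟨x.1 ∪ x.2, x.1⟩) ?_ ?_ ?_ ?_ ?_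
  · simp only [mem_sigma, mem_filter, mem_powerset]
    rintro ⟨s, t⟩ ⟨⟨hsu, hs⟩, hts, ht⟩
    exact ⟨⟨hts.trans hsu, ht⟩, sdiff_subset_sdiff hsu subset_rfl, hsdiff hs ht⟩
  · simp only [mem_sigma, mem_filter, mem_powerset]
    rintro ⟨t, r⟩ ⟨⟨htu, ht⟩, hr⟩
    exact ⟨⟨union_subset htu (hr.1.trans sdiff_subset), hunion ht hr.2⟩, subset_union_left, ht⟩
  · simp only [mem_sigma, mem_filter, mem_powerset]
    rintro ⟨s, t⟩ ⟨-, hts, -⟩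
    rw [union_sdiff_of_subset hts]
  · simp only [mem_sigma, mem_filter, mem_powerset]
    rintro ⟨t, r⟩ ⟨-, hr, -⟩
    rw [union_sdiff_cancel_left (disjoint_sdiff.mono_right hr)]
  · simp only [mem_sigma, mem_filter, mem_powerset]
    rintro ⟨s, t⟩ ⟨-, hts, -⟩
    rw [sdiff_sdiff_left, sup_eq_union, union_sdiff_of_subset hts]

end Powerset

theorem image_inter_image_comm {α β γ δ : Type*} [DecidableEq α] [DecidableEq β] [DecidableEq γ]
    [DecidableEq δ] {X H : Finset α} {H' : Finset β} {e : α → β} {f : α → γ} {f' : β → δ}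
    {e' : γ → δ} (hmem : ∀ x ∈ X, e x ∈ H' ↔ x ∈ H)
    (hcomm : ∀ x ∈ X, x ∈ H → f' (e x) = e' (f x)) :
    (X.image e ∩ H').image f' = ((X ∩ H).image f).image e' := by
  have : X.image e ∩ H' = (X ∩ H).image e := by
    ext y
    simp only [mem_inter, mem_image]
    grind
  rw [this, image_image, image_image]
  exact image_congr fun x hx ↦ hcomm x (mem_inter.1 hx).1 (mem_inter.1 hx).2

theorem image_prodMap_inter_product_comm {α₁ α₂ β₁ β₂ γ₁ γ₂ δ₁ δ₂ : Type*} [DecidableEq α₁]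
    [DecidableEq α₂] [DecidableEq β₁] [DecidableEq β₂] [DecidableEq γ₁] [DecidableEq γ₂]
    [DecidableEq δ₁] [DecidableEq δ₂] {X : Finset (α₁ × α₂)} {H₁ : Finset α₁} {H₂ : Finset α₂}
    {H₁' : Finset β₁} {H₂' : Finset β₂} {e₁ : α₁ → β₁} {e₂ : α₂ → β₂} {f₁ : α₁ → γ₁} {f₂ : α₂ → γ₂}
    {f₁' : β₁ → δ₁} {f₂' : β₂ → δ₂} {e₁' : γ₁ → δ₁} {e₂' : γ₂ → δ₂}
    (h₁ : ∀ p ∈ X, (e₁ p.1 ∈ H₁' ↔ p.1 ∈ H₁) ∧ f₁' (e₁ p.1) = e₁' (f₁ p.1))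
    (h₂ : ∀ p ∈ X, (e₂ p.2 ∈ H₂' ↔ p.2 ∈ H₂) ∧ f₂' (e₂ p.2) = e₂' (f₂ p.2)) :
    (X.image (Prod.map e₁ e₂) ∩ H₁' ×ˢ H₂').image (Prod.map f₁' f₂') =
      ((X ∩ H₁ ×ˢ H₂).image (Prod.map f₁ f₂)).image (Prod.map e₁' e₂') :=
  image_inter_image_comm
    (fun p hp ↦ by
      rw [mem_product, mem_product, Prod.map_fst, Prod.map_snd, (h₁ p hp).1, (h₂ p hp).1])
    fun p hp _ ↦ Prod.ext (h₁ p hp).2 (h₂ p hp).2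

theorem image_inter_sdiff_image_inter {α β : Type*} [DecidableEq α] [DecidableEq β]
    {X Y H : Finset α} {f : α → β} (hf : Set.InjOn f H) :
    (X ∩ H).image f \ (Y ∩ H).image f = ((X \ Y) ∩ H).image f := by
  ext b
  simp only [mem_sdiff, mem_image, mem_inter]
  grind [Set.InjOn]

section PartialMatching

variable {α β γ δ M : Type*} [AddCommMonoid M]

/-- A partial matching between `α` and `β`, encoded by its set of pairs. -/
def IsPartialMatching (s : Finset (α × β)) : Prop :=
  Set.InjOn Prod.fst (s : Set (α × β)) ∧ Set.InjOn Prod.snd (s : Set (α × β))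

open scoped Classical in
/-- The partial matchings all of whose pairs lie in `S`; those of the paper are the case where `S`
is a product, the general case is what sums over compositions decompose into. -/
noncomputable def partialMatchings (S : Finset (α × β)) : Finset (Finset (α × β)) :=
  {s ∈ S.powerset | IsPartialMatching s}

theorem isPartialMatching_iff {s : Finset (α × β)} :
    IsPartialMatching s ↔
      (∀ p ∈ s, ∀ q ∈ s, p.1 = q.1 → p = q) ∧ ∀ p ∈ s, ∀ q ∈ s, p.2 = q.2 → p = q := by
  simp only [IsPartialMatching, Set.InjOn, mem_coe]

theorem mem_partialMatchings {S s : Finset (α × β)} :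
    s ∈ partialMatchings S ↔ s ⊆ S ∧ IsPartialMatching s := by
  simp [partialMatchings]

theorem partialMatchings_empty : partialMatchings (∅ : Finset (α × β)) = {∅} := by
  ext s
  rw [mem_partialMatchings, subset_empty, mem_singleton, and_iff_left_iff_imp]
  rintro rfl
  simp [IsPartialMatching]

theorem IsPartialMatching.mono {s t : Finset (α × β)} (ht : IsPartialMatching t) (hst : s ⊆ t) :
    IsPartialMatching s :=
  ⟨ht.1.mono (coe_subset.2 hst), ht.2.mono (coe_subset.2 hst)⟩

theorem injOn_prodMap {s : Set (α × β)} {f : α → γ} {g : β → δ}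
    (hf : Set.InjOn f (Prod.fst '' s)) (hg : Set.InjOn g (Prod.snd '' s)) :
    Set.InjOn (Prod.map f g) s := fun p hp q hq h ↦
  Prod.ext (hf ⟨p, hp, rfl⟩ ⟨q, hq, rfl⟩ (congrArg Prod.fst h))
    (hg ⟨p, hp, rfl⟩ ⟨q, hq, rfl⟩ (congrArg Prod.snd h))

section Image

variable [DecidableEq γ] [DecidableEq δ] {f : α → γ} {g : β → δ}

theorem image_fst_image_prodMap [DecidableEq α] (f : α → γ) (g : β → δ) (s : Finset (α × β)) :
    (s.image (Prod.map f g)).image Prod.fst = (s.image Prod.fst).image f := by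
  simp only [image_image]
  rfl

theorem image_snd_image_prodMap [DecidableEq β] (f : α → γ) (g : β → δ) (s : Finset (α × β)) :
    (s.image (Prod.map f g)).image Prod.snd = (s.image Prod.snd).image g := by
  simp only [image_image]
  rfl

theorem isPartialMatching_image {s : Finset (α × β)}
    (hf : Set.InjOn f (Prod.fst '' (s : Set (α × β))))
    (hg : Set.InjOn g (Prod.snd '' (s : Set (α × β)))) :
    IsPartialMatching (s.image (Prod.map f g)) ↔ IsPartialMatching s := by
  have hinj := injOn_prodMap hf hg
  rw [IsPartialMatching, coe_image, ← hinj.comp_iff, ← hinj.comp_iff]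
  exact and_congr ⟨fun h ↦ h.of_comp (f := Prod.fst) (g := f),
    fun h ↦ hf.comp h (Set.mapsTo_image _ _)⟩ ⟨fun h ↦ h.of_comp (f := Prod.snd) (g := g),
    fun h ↦ hg.comp h (Set.mapsTo_image _ _)⟩

theorem sum_partialMatchings_image {S : Finset (α × β)}
    (hf : Set.InjOn f (Prod.fst '' (S : Set (α × β))))
    (hg : Set.InjOn g (Prod.snd '' (S : Set (α × β)))) (F : Finset (γ × δ) → M) :
    ∑ s ∈ partialMatchings (S.image (Prod.map f g)), F s =
      ∑ s ∈ partialMatchings S, F (s.image (Prod.map f g)) := by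
  classical
  rw [partialMatchings, sum_filter, sum_powerset_image (injOn_prodMap hf hg), partialMatchings,
    sum_filter]
  refine sum_congr rfl fun s hs ↦ ?_
  have hs : (s : Set (α × β)) ⊆ S := coe_subset.2 (mem_powerset.1 hs)
  simp only [isPartialMatching_image (hf.mono (Set.image_mono hs)) (hg.mono (Set.image_mono hs))]

end Image

variable [DecidableEq α] [DecidableEq β]

theorem isPartialMatching_union {s t : Finset (α × β)} (h : Disjoint s t) :
    IsPartialMatching (s ∪ t) ↔ IsPartialMatching s ∧ IsPartialMatching t ∧
      ∀ p ∈ s, p.1 ∉ t.image Prod.fst ∧ p.2 ∉ t.image Prod.snd := by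
  rw [IsPartialMatching, coe_union, Set.injOn_union (by exact_mod_cast h),
    Set.injOn_union (by exact_mod_cast h)]
  simp only [IsPartialMatching, mem_coe, mem_image, not_exists, not_and, ne_eq]
  grind

theorem IsPartialMatching.union {s t : Finset (α × β)} (hs : IsPartialMatching s)
    (ht : IsPartialMatching t)
    (h₁ : Disjoint (s.image Prod.fst) (t.image Prod.fst))
    (h₂ : Disjoint (s.image Prod.snd) (t.image Prod.snd)) : IsPartialMatching (s ∪ t) :=
  (isPartialMatching_union (Disjoint.of_image_finset h₁)).2 ⟨hs, ht, fun _ hp ↦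
    ⟨disjoint_left.1 h₁ (mem_image_of_mem _ hp), disjoint_left.1 h₂ (mem_image_of_mem _ hp)⟩⟩

theorem sum_partialMatchings_union {S T : Finset (α × β)} (h : Disjoint S T)
    (F : Finset (α × β) → M) :
    ∑ s ∈ partialMatchings (S ∪ T), F s =
      ∑ t ∈ partialMatchings T,
        ∑ s ∈ partialMatchings {p ∈ S | p.1 ∉ t.image Prod.fst ∧ p.2 ∉ t.image Prod.snd},
          F (s ∪ t) := by
  classical
  rw [partialMatchings, sum_filter, sum_powerset_union h, sum_comm, partialMatchings, sum_filter]
  refine sum_congr rfl fun t ht ↦ ?_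
  rw [← sum_filter]
  have hdisj {s} (hs : s ⊆ S) : Disjoint s t := h.mono hs (mem_powerset.1 ht)
  split_ifs with hmt
  · refine sum_congr (ext fun s ↦ ?_) fun _ _ ↦ rfl
    rw [mem_filter, mem_powerset, mem_partialMatchings, subset_iff (s₂ := filter _ _)]
    simp only [mem_filter, forall_and, and_assoc, ← subset_iff]
    refine and_congr_right fun hs ↦ ?_
    rw [isPartialMatching_union (hdisj hs)]
    simp only [forall_and]
    tauto
  · refine sum_eq_zero fun s hs ↦ absurd ?_ hmt
    rw [mem_filter, mem_powerset] at hs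
    exact ((isPartialMatching_union (hdisj hs.1)).1 hs.2).2.1

theorem sum_partialMatchings_product_union {X : Finset α} {Y : Finset β} {T : Finset (α × β)}
    (h : Disjoint (X ×ˢ Y) T) (F : Finset (α × β) → M) :
    ∑ s ∈ partialMatchings (X ×ˢ Y ∪ T), F s =
      ∑ t ∈ partialMatchings T,
        ∑ s ∈ partialMatchings ((X \ t.image Prod.fst) ×ˢ (Y \ t.image Prod.snd)), F (s ∪ t) := by
  rw [sum_partialMatchings_union h]
  refine sum_congr rfl fun t _ ↦ ?_
  rw [filter_product (fun a ↦ a ∉ t.image Prod.fst) fun b ↦ b ∉ t.image Prod.snd,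
    filter_notMem_eq_sdiff, filter_notMem_eq_sdiff]

theorem sum_partialMatchings_union_of_disjoint {X X' : Finset α} {Y Y' : Finset β}
    (hX : Disjoint X X') (hY : Disjoint Y Y') (F : Finset (α × β) → M) :
    ∑ s ∈ partialMatchings (X ×ˢ Y ∪ X' ×ˢ Y'), F s =
      ∑ s ∈ partialMatchings (X ×ˢ Y), ∑ t ∈ partialMatchings (X' ×ˢ Y'), F (s ∪ t) := by
  rw [sum_partialMatchings_product_union (disjoint_product.2 (Or.inl hX)), sum_comm]
  refine sum_congr rfl fun t ht ↦ ?_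
  have ht := (mem_partialMatchings.1 ht).1
  have htX : t.image Prod.fst ⊆ X' := image_subset_iff.2 fun p hp ↦ (mem_product.1 (ht hp)).1
  have htY : t.image Prod.snd ⊆ Y' := image_subset_iff.2 fun p hp ↦ (mem_product.1 (ht hp)).2
  rw [(hX.mono_right htX).sdiff_eq_left, (hY.mono_right htY).sdiff_eq_left]

end PartialMatching

section HalfEdges

/-- The block of the composition `l` that contains the position `k`, blocks being numbered from `1`:
`BD.v` as a function of the list of block sizes alone. -/
def blockAt (l : List ℕ) (k : ℕ) : ℕ :=
  (List.range l.length).countP (fun i ↦ (l.take i).sum < k)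

/-- The positions that belong to the blocks in `I`: `BD.HI` as a function of the list of block sizes
alone. -/
def blockPositions (l : List ℕ) (I : Finset ℕ) : Finset ℕ := {k ∈ Icc 1 l.sum | blockAt l k ∈ I}

/-- The sublist of the blocks whose number is in `I`: the list of block sizes of `BD.sub`. -/
def selectBlocks (l : List ℕ) (I : Finset ℕ) : List ℕ :=
  ((List.range l.length).filter (fun i ↦ i + 1 ∈ I)).map (fun i ↦ l.getD i 0)

variable {l l' : List ℕ} {I J K : Finset ℕ} {k x : ℕ}

theorem mem_blockPositions : k ∈ blockPositions l I ↔ k ∈ Icc 1 l.sum ∧ blockAt l k ∈ I :=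
  mem_filter

theorem blockPositions_subset (l : List ℕ) (I : Finset ℕ) : blockPositions l I ⊆ Icc 1 l.sum :=
  filter_subset _ _

theorem blockPositions_mono (hIJ : I ⊆ J) : blockPositions l I ⊆ blockPositions l J :=
  monotone_filter_right _ fun _ _ h ↦ hIJ h

theorem blockAt_le_length (l : List ℕ) (k : ℕ) : blockAt l k ≤ l.length :=
  List.countP_le_length.trans_eq List.length_range

theorem blockAt_concat (l : List ℕ) (x k : ℕ) :
    blockAt (l ++ [x]) k = blockAt l k + if l.sum < k then 1 else 0 := by
  have (i) (hi : i ∈ List.range l.length) : (l ++ [x]).take i = l.take i :=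
    List.take_append_of_le_length (List.mem_range.1 hi).le
  rw [blockAt, List.length_append, List.length_singleton, List.range_succ, List.countP_append,
    List.countP_singleton, List.take_left]
  congr 1
  · exact List.countP_congr fun i hi ↦ by rw [this i hi]
  · simp

theorem blockAt_eq_length (h : l.sum < k) : blockAt l k = l.length := by
  rw [blockAt, List.countP_eq_length.2, List.length_range]
  exact fun i _ ↦ decide_eq_true (((l.take_sublist i).sum_le_sum (by simp)).trans_lt h)

theorem blockAt_append_of_le (hk : k ≤ l.sum) : blockAt (l ++ l') k = blockAt l k := by
  induction l' using List.reverseRecOn with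
  | nil => rw [List.append_nil]
  | append_singleton l' x ih =>
    rw [← List.append_assoc, blockAt_concat, ih, if_neg (by rw [List.sum_append]; lia), add_zero]

theorem blockAt_append_add (hk : 0 < k) :
    blockAt (l ++ l') (k + l.sum) = blockAt l' k + l.length := by
  induction l' using List.reverseRecOn with
  | nil => rw [List.append_nil, blockAt_eq_length (by lia), blockAt_eq_length (by simpa)]; simp
  | append_singleton l' x ih =>
    rw [← List.append_assoc, blockAt_concat, ih, blockAt_concat, List.sum_append]
    simp only [add_comm l.sum, add_lt_add_iff_right]
    ring

theorem blockAt_pos (hk : k ∈ Icc 1 l.sum) : 0 < blockAt l k := by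
  have hk := mem_Icc.1 hk
  have hl : 0 < l.length := List.length_pos_of_sum_pos l (by lia)
  exact List.countP_pos_iff.2 ⟨0, List.mem_range.2 hl, by simp; lia⟩

theorem zero_notMem_blockPositions (l : List ℕ) (I : Finset ℕ) : 0 ∉ blockPositions l I :=
  zero_notMem_of_subset_Icc (blockPositions_subset l I)

theorem mem_blockPositions_append (hk : k ≤ l.sum) :
    k ∈ blockPositions (l ++ l') I ↔ k ∈ blockPositions l I := by
  rw [mem_blockPositions, mem_blockPositions, blockAt_append_of_le hk, mem_Icc, mem_Icc,
    List.sum_append]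
  grind

theorem blockPositions_append_glue (hI : I ⊆ Icc 1 l.length) (hJ : 0 ∉ J) :
    blockPositions (l ++ l') (glue l.length I J) =
      glue l.sum (blockPositions l I) (blockPositions l' J) := by
  ext k
  rcases le_or_gt k l.sum with hk | hk
  · rw [mem_blockPositions_append hk, mem_glue_of_le (zero_notMem_blockPositions _ _) hk,
      mem_blockPositions, mem_blockPositions, mem_glue_of_le hJ (blockAt_le_length l k)]
  · obtain ⟨j, hj, rfl⟩ : ∃ j, 0 < j ∧ j + l.sum = k := ⟨k - l.sum, by lia, by lia⟩
    have hsum : j + l.sum ∈ Icc 1 (l.sum + l'.sum) ↔ j ∈ Icc 1 l'.sum := by simp only [mem_Icc]; lia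
    rw [add_mem_glue (blockPositions_subset l I) hj, mem_blockPositions, mem_blockPositions,
      blockAt_append_add hj, List.sum_append, hsum]
    exact and_congr_right fun hj ↦ add_mem_glue hI (blockAt_pos hj)

theorem rankIn_succ (I : Finset ℕ) (n : ℕ) :
    rankIn I (n + 1) = rankIn I n + if n + 1 ∈ I then 1 else 0 := by
  split_ifs with h
  · have : {x ∈ I | x ≤ n + 1} = insert (n + 1) {x ∈ I | x ≤ n} := by grind
    rw [rankIn, this, card_insert_of_notMem (by simp), rankIn]
  · exact congrArg card (filter_congr fun x hx ↦ by grind)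

theorem selectBlocks_concat (l : List ℕ) (x : ℕ) (I : Finset ℕ) :
    selectBlocks (l ++ [x]) I = selectBlocks l I ++ if l.length + 1 ∈ I then [x] else [] := by
  have (i) (hi : i ∈ (List.range l.length).filter (· + 1 ∈ I)) :
      (l ++ [x]).getD i 0 = l.getD i 0 :=
    List.getD_append _ _ _ _ (List.mem_range.1 (List.mem_filter.1 hi).1)
  rw [selectBlocks, List.length_append, List.length_singleton, List.range_succ, List.filter_append,
    List.map_append, List.map_congr_left this, selectBlocks, List.filter_singleton]
  split_ifs <;> simp_all

theorem selectBlocks_sublist (l : List ℕ) (I : Finset ℕ) : (selectBlocks l I).Sublist l := by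
  induction l using List.reverseRecOn with
  | nil => exact List.Sublist.refl _
  | append_singleton l x ih =>
    rw [selectBlocks_concat]
    exact ih.append (by split_ifs <;> simp)

theorem selectBlocks_eq_self (h : Icc 1 l.length ⊆ I) : selectBlocks l I = l := by
  induction l using List.reverseRecOn with
  | nil => rfl
  | append_singleton l x ih =>
    rw [List.length_append, List.length_singleton] at h
    rw [selectBlocks_concat, ih ((Icc_subset_Icc_right (by lia)).trans h),
      if_pos (h (by simp))]

theorem length_selectBlocks (hI : 0 ∉ I) : (selectBlocks l I).length = rankIn I l.length := by
  induction l using List.reverseRecOn with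
  | nil =>
    have : {x ∈ I | x ≤ 0} = ∅ := filter_eq_empty_iff.2 fun x hx h ↦ hI (Nat.le_zero.1 h ▸ hx)
    exact (congrArg card this).symm
  | append_singleton l x ih =>
    rw [selectBlocks_concat, List.length_append, ih, List.length_append, List.length_singleton,
      rankIn_succ]
    split_ifs <;> rfl

theorem selectBlocks_append_glue (hI : I ⊆ Icc 1 l.length) (hJ : 0 ∉ J) :
    selectBlocks (l ++ l') (glue l.length I J) = selectBlocks l I ++ selectBlocks l' J := by
  induction l' using List.reverseRecOn with
  | nil =>
    rw [List.append_nil, selectBlocks, List.filter_congr (q := fun i ↦ i + 1 ∈ I)]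
    · exact (List.append_nil _).symm
    · exact fun i hi ↦ decide_eq_decide.2 (mem_glue_of_le hJ (List.mem_range.1 hi))
  | append_singleton l' x ih =>
    have hlast : (l ++ l').length + 1 ∈ glue l.length I J ↔ l'.length + 1 ∈ J := by
      rw [List.length_append, add_assoc, add_comm l.length, add_mem_glue hI (Nat.succ_pos _)]
    rw [← List.append_assoc, selectBlocks_concat, ih, selectBlocks_concat, List.append_assoc]
    simp only [hlast]

theorem blockPositions_concat (l : List ℕ) (x : ℕ) (I : Finset ℕ) :
    blockPositions (l ++ [x]) I =
      blockPositions l I ∪ if l.length + 1 ∈ I then Ioc l.sum (l.sum + x) else ∅ := by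
  ext k
  rcases le_or_gt k l.sum with hk | hk
  · rw [mem_blockPositions_append hk, mem_union, or_iff_left]
    split_ifs <;> simp [hk]
  · have hkl : k ∉ blockPositions l I := fun h ↦ by
      have := mem_Icc.1 (blockPositions_subset l I h); lia
    rw [mem_blockPositions, blockAt_concat, blockAt_eq_length hk, if_pos hk, mem_union,
      or_iff_right hkl, List.sum_append, List.sum_singleton]
    split_ifs with h
    · simp only [h, mem_Icc, mem_Ioc, and_true]
      lia
    · simp [h]

theorem sum_selectBlocks (l : List ℕ) (I : Finset ℕ) :
    (selectBlocks l I).sum = #(blockPositions l I) := by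
  induction l using List.reverseRecOn with
  | nil => rfl
  | append_singleton l x ih =>
    have hdisj : Disjoint (blockPositions l I) (Ioc l.sum (l.sum + x)) :=
      disjoint_left.2 fun k hk hk' ↦ by
        have := mem_Icc.1 (blockPositions_subset l I hk)
        have := mem_Ioc.1 hk'
        lia
    rw [selectBlocks_concat, blockPositions_concat, List.sum_append, ih]
    split_ifs
    · simp [card_union_of_disjoint hdisj]
    · simp

theorem blockAt_selectBlocks (hI : 0 ∉ I) (hk : k ∈ blockPositions l I) :
    blockAt (selectBlocks l I) (rankIn (blockPositions l I) k) = rankIn I (blockAt l k) := by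
  induction l using List.reverseRecOn with
  | nil => exact absurd (blockPositions_subset _ _ hk) (by simp)
  | append_singleton l x ih =>
    rcases le_or_gt k l.sum with hkl | hkl
    · have hrank : rankIn (blockPositions (l ++ [x]) I) k = rankIn (blockPositions l I) k :=
        congrArg card <| ext fun j ↦ by
          simp only [mem_filter, and_congr_left_iff]
          exact fun hj ↦ mem_blockPositions_append (hj.trans hkl)
      rw [hrank, selectBlocks_concat, blockAt_append_of_le, blockAt_append_of_le hkl,
        ih ((mem_blockPositions_append hkl).1 hk)]
      exact sum_selectBlocks l I ▸ rankIn_le_card _ _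
    · have hrank : (selectBlocks l I).sum < rankIn (blockPositions (l ++ [x]) I) k := by
        rw [sum_selectBlocks]
        refine card_lt_card <| ssubset_iff_of_subset (fun j hj ↦ ?_) |>.2
          ⟨k, mem_filter.2 ⟨hk, le_rfl⟩, fun h ↦ ?_⟩
        · have hj' := (mem_Icc.1 (blockPositions_subset l I hj)).2
          exact mem_filter.2 ⟨(mem_blockPositions_append hj').2 hj, hj'.trans hkl.le⟩
        · exact hkl.not_ge (mem_Icc.1 (blockPositions_subset l I h)).2
      have hlast : blockAt (l ++ [x]) k = l.length + 1 := by
        rw [blockAt_concat, blockAt_eq_length hkl, if_pos hkl]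
      have hmem : l.length + 1 ∈ I := hlast ▸ (mem_blockPositions.1 hk).2
      rw [selectBlocks_concat, if_pos hmem, blockAt_concat, blockAt_eq_length hrank, if_pos hrank,
        hlast, length_selectBlocks hI, rankIn_succ, if_pos hmem]

theorem selectBlocks_selectBlocks (hKI : K ⊆ I) (hI : 0 ∉ I) :
    selectBlocks (selectBlocks l I) (K.image (rankIn I)) = selectBlocks l K := by
  induction l using List.reverseRecOn with
  | nil => rfl
  | append_singleton l x ih =>
    rw [selectBlocks_concat, selectBlocks_concat]
    by_cases h : l.length + 1 ∈ I
    · have hlast : (selectBlocks l I).length + 1 = rankIn I (l.length + 1) := by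
        rw [length_selectBlocks hI, rankIn_succ, if_pos h]
      rw [if_pos h, selectBlocks_concat, ih, hlast]
      simp only [rankIn_mem_image_iff hKI h]
    · rw [if_neg h, if_neg (fun h' ↦ h (hKI h')), List.append_nil, List.append_nil, ih]

theorem blockPositions_selectBlocks (hKI : K ⊆ I) (hI : 0 ∉ I) :
    blockPositions (selectBlocks l I) (K.image (rankIn I)) =
      (blockPositions l K).image (rankIn (blockPositions l I)) := by
  rw [blockPositions, sum_selectBlocks, ← image_rankIn, filter_image]
  refine congrArg (image _) (ext fun k ↦ ?_)
  rw [mem_filter]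
  refine ⟨fun ⟨hk, h⟩ ↦ ?_, fun h ↦ ?_⟩
  · rw [blockAt_selectBlocks hI hk, rankIn_mem_image_iff hKI (mem_blockPositions.1 hk).2] at h
    exact mem_blockPositions.2 ⟨blockPositions_subset l I hk, h⟩
  · have hk := blockPositions_mono hKI h
    rw [blockAt_selectBlocks hI hk, rankIn_mem_image_iff hKI (mem_blockPositions.1 hk).2]
    exact ⟨hk, (mem_blockPositions.1 h).2⟩

end HalfEdges

attribute [ext] BD

namespace BD

variable {A B C G : BD} {I J K X Y : Finset ℕ} {s u r : Finset (ℕ × ℕ)} {p : ℕ × ℕ} {k : ℕ}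

theorem HI_subset (G : BD) (I : Finset ℕ) : G.HI I ⊆ Icc 1 G.omega := filter_subset _ _

theorem zero_notMem_HI (G : BD) (I : Finset ℕ) : 0 ∉ G.HI I :=
  zero_notMem_blockPositions G.lam I

theorem mem_HI (hk : k ∈ Icc 1 G.omega) : k ∈ G.HI I ↔ G.v k ∈ I :=
  mem_filter.trans (and_iff_right hk)

theorem HI_mono (h : I ⊆ J) : G.HI I ⊆ G.HI J := blockPositions_mono h

theorem phi_eq_rankIn (G : BD) (I : Finset ℕ) : G.phi I = rankIn (G.HI I) := rfl

theorem injOn_phi (G : BD) (I : Finset ℕ) : Set.InjOn (G.phi I) (G.HI I) :=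
  (rankIn_strictMonoOn _).injOn

theorem v_mem_Icc (hk : k ∈ Icc 1 G.omega) : G.v k ∈ Icc 1 G.nv :=
  mem_Icc.2 ⟨blockAt_pos hk, blockAt_le_length G.lam k⟩

theorem HI_Icc_nv (G : BD) : G.HI (Icc 1 G.nv) = Icc 1 G.omega :=
  filter_true_of_mem fun _ ↦ v_mem_Icc

namespace Valid

theorem up_subset (hG : G.Valid) : G.up ⊆ Icc 1 G.omega := hG.2.1

theorem dn_subset (hG : G.Valid) : G.dn ⊆ Icc 1 G.omega := hG.2.2.1

theorem isPartialMatching_ed (hG : G.Valid) : IsPartialMatching G.ed :=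
  isPartialMatching_iff.2 hG.2.2.2.2

theorem ed_subset (hG : G.Valid) : G.ed ⊆ G.up ×ˢ G.dn := fun p hp ↦
  mem_product.2 ⟨(hG.2.2.2.1 p hp).1, (hG.2.2.2.1 p hp).2.1⟩

theorem fst_mem_Icc (hG : G.Valid) (hp : p ∈ G.ed) : p.1 ∈ Icc 1 G.omega :=
  hG.up_subset (mem_product.1 (hG.ed_subset hp)).1

theorem snd_mem_Icc (hG : G.Valid) (hp : p ∈ G.ed) : p.2 ∈ Icc 1 G.omega :=
  hG.dn_subset (mem_product.1 (hG.ed_subset hp)).2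

theorem image_fst_ed_subset (hG : G.Valid) : G.ed.image Prod.fst ⊆ Icc 1 G.omega :=
  image_subset_iff.2 fun _ ↦ hG.fst_mem_Icc

theorem image_snd_ed_subset (hG : G.Valid) : G.ed.image Prod.snd ⊆ Icc 1 G.omega :=
  image_subset_iff.2 fun _ ↦ hG.snd_mem_Icc

theorem HfUp_subset (hG : G.Valid) : G.HfUp ⊆ Icc 1 G.omega := sdiff_subset.trans hG.up_subset

theorem HfDn_subset (hG : G.Valid) : G.HfDn ⊆ Icc 1 G.omega := sdiff_subset.trans hG.dn_subset

theorem eq_eps (hG : G.Valid) (h : G.nv = 0) : G = eps := by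
  have hlam : G.lam = [] := List.length_eq_zero_iff.1 h
  have homega : Icc 1 G.omega = ∅ := by simp [omega, hlam]
  have hup : G.up = ∅ := subset_empty.1 (homega ▸ hG.up_subset)
  have hdn : G.dn = ∅ := subset_empty.1 (homega ▸ hG.dn_subset)
  refine BD.ext hlam hup hdn (subset_empty.1 ?_)
  simpa [hup] using hG.ed_subset

end Valid

section Sub

theorem omega_sub (G : BD) (I : Finset ℕ) : (G.sub I).omega = #(G.HI I) :=
  sum_selectBlocks G.lam I

theorem nv_sub (hI : I ⊆ Icc 1 G.nv) : (G.sub I).nv = #I :=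
  (length_selectBlocks (zero_notMem_of_subset_Icc hI)).trans <|
    congrArg card <| filter_true_of_mem fun _ hi ↦ (mem_Icc.1 (hI hi)).2

theorem v_sub (hI : 0 ∉ I) (hk : k ∈ G.HI I) : (G.sub I).v (G.phi I k) = rankIn I (G.v k) :=
  blockAt_selectBlocks hI hk

theorem HI_sub (hKI : K ⊆ I) (hI : 0 ∉ I) :
    (G.sub I).HI (K.image (rankIn I)) = (G.HI K).image (G.phi I) :=
  blockPositions_selectBlocks hKI hI

theorem ed_sub (hG : G.Valid) (I : Finset ℕ) :
    (G.sub I).ed = (G.ed ∩ G.HI I ×ˢ G.HI I).image (Prod.map (G.phi I) (G.phi I)) := by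
  refine congrArg (image _) (ext fun p ↦ ?_)
  rw [mem_filter, mem_inter, mem_product]
  exact and_congr_right fun hp ↦
    and_congr (mem_HI (hG.fst_mem_Icc hp)).symm (mem_HI (hG.snd_mem_Icc hp)).symm

theorem sub_valid (hG : G.Valid) (hI : 0 ∉ I) : (G.sub I).Valid := by
  have hrange (X : Finset ℕ) : (X ∩ G.HI I).image (G.phi I) ⊆ Icc 1 (G.sub I).omega := by
    rw [omega_sub, ← image_rankIn]
    exact image_subset_image inter_subset_right
  have hed : ∀ p ∈ (G.sub I).ed, ∃ q ∈ G.ed, q.1 ∈ G.HI I ∧ q.2 ∈ G.HI I ∧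
      Prod.map (G.phi I) (G.phi I) q = p := by
    intro p hp
    rw [ed_sub hG, mem_image] at hp
    obtain ⟨q, hq, rfl⟩ := hp
    rw [mem_inter, mem_product] at hq
    exact ⟨q, hq.1, hq.2.1, hq.2.2, rfl⟩
  refine ⟨fun x hx ↦ hG.1 x ((selectBlocks_sublist _ _).mem hx), hrange _, hrange _, fun p hp ↦ ?_,
    isPartialMatching_iff.1 ?_⟩
  · obtain ⟨q, hq, h1, h2, rfl⟩ := hed p hp
    obtain ⟨hup, hdn, hlt⟩ := hG.2.2.2.1 q hq
    refine ⟨mem_image_of_mem _ (mem_inter.2 ⟨hup, h1⟩),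
      mem_image_of_mem _ (mem_inter.2 ⟨hdn, h2⟩), ?_⟩
    rw [Prod.map_fst, Prod.map_snd, v_sub hI h1, v_sub hI h2]
    exact rankIn_strictMonoOn I (mem_filter.1 h1).2 (mem_filter.1 h2).2 hlt
  · have hinj (f : ℕ × ℕ → ℕ) (hf : ∀ q ∈ G.HI I ×ˢ G.HI I, f q ∈ G.HI I) : Set.InjOn (G.phi I)
        (f '' (G.ed ∩ G.HI I ×ˢ G.HI I : Finset (ℕ × ℕ))) :=
      (injOn_phi G I).mono fun _ ⟨q, hq, hqx⟩ ↦ hqx ▸ hf q (mem_inter.1 hq).2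
    rw [ed_sub hG, isPartialMatching_image (hinj _ fun q hq ↦ (mem_product.1 hq).1)
      (hinj _ fun q hq ↦ (mem_product.1 hq).2)]
    exact hG.isPartialMatching_ed.mono inter_subset_left

theorem sub_sub (hG : G.Valid) (hKI : K ⊆ I) (hI : 0 ∉ I) :
    (G.sub I).sub (K.image (rankIn I)) = G.sub K := by
  have hHI : G.HI K ⊆ G.HI I := HI_mono hKI
  have hmem {x : ℕ} (hx : x ∈ G.HI I) : G.phi I x ∈ (G.HI K).image (G.phi I) ↔ x ∈ G.HI K :=
    rankIn_mem_image_iff hHI hx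
  have hphi (x : ℕ) : (G.sub I).phi (K.image (rankIn I)) (G.phi I x) = G.phi K x := by
    rw [phi_eq_rankIn (G.sub I), HI_sub hKI hI]
    exact rankIn_image_rankIn hHI x
  have hhalf (X : Finset ℕ) : ((X ∩ G.HI I).image (G.phi I) ∩
      (G.sub I).HI (K.image (rankIn I))).image ((G.sub I).phi (K.image (rankIn I))) =
        (X ∩ G.HI K).image (G.phi K) := by
    rw [HI_sub hKI hI, image_inter_image_comm (f := G.phi K) (e' := @id ℕ)
      (fun x hx ↦ hmem (mem_inter.1 hx).2) fun x _ _ ↦ hphi x, image_id, inter_assoc,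
      inter_eq_right.2 hHI]
  refine BD.ext (selectBlocks_selectBlocks hKI hI) (hhalf _) (hhalf _) ?_
  rw [ed_sub (sub_valid hG hI), ed_sub hG, ed_sub hG, HI_sub hKI hI,
    image_inter_image_comm (H := G.HI K ×ˢ G.HI K) (f := Prod.map (G.phi K) (G.phi K))
      (e' := @id (ℕ × ℕ)),
    image_id, inter_assoc, inter_eq_right.2 (product_subset_product hHI hHI)]
  · intro p hp
    have hp := mem_product.1 (mem_inter.1 hp).2
    rw [mem_product, mem_product, Prod.map_fst, Prod.map_snd, hmem hp.1, hmem hp.2]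
  · exact fun p _ _ ↦ Prod.ext (hphi p.1) (hphi p.2)

theorem sub_empty (hG : G.Valid) : G.sub ∅ = eps :=
  (sub_valid hG (notMem_empty 0)).eq_eps (nv_sub (empty_subset _))

theorem sub_eq_eps_iff (hG : G.Valid) (hI : I ⊆ Icc 1 G.nv) : G.sub I = eps ↔ I = ∅ := by
  refine ⟨fun h ↦ ?_, fun h ↦ h ▸ sub_empty hG⟩
  rw [← card_eq_zero, ← nv_sub hI, h]
  rfl

theorem sub_Icc_nv (hG : G.Valid) : G.sub (Icc 1 G.nv) = G := by
  have hphi {x : ℕ} (hx : x ∈ Icc 1 G.omega) : G.phi (Icc 1 G.nv) x = x := by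
    rw [phi_eq_rankIn, HI_Icc_nv]
    exact rankIn_Icc (mem_Icc.1 hx).2
  have hhalf {X : Finset ℕ} (hX : X ⊆ Icc 1 G.omega) :
      (X ∩ G.HI (Icc 1 G.nv)).image (G.phi (Icc 1 G.nv)) = X := by
    rw [HI_Icc_nv, inter_eq_left.2 hX]
    exact (image_congr fun x hx ↦ hphi (hX hx)).trans image_id
  refine BD.ext (selectBlocks_eq_self subset_rfl) (hhalf hG.up_subset) (hhalf hG.dn_subset) ?_
  rw [ed_sub hG, HI_Icc_nv, inter_eq_left.2
    (hG.ed_subset.trans (product_subset_product hG.up_subset hG.dn_subset))]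
  exact (image_congr fun p hp ↦
    Prod.ext (hphi (hG.fst_mem_Icc hp)) (hphi (hG.snd_mem_Icc hp))).trans image_id

end Sub

section Isolated

theorem isolated_empty (G : BD) : G.Isolated ∅ := fun _ _ ↦ by simp

theorem isolated_Icc_nv (hG : G.Valid) : G.Isolated (Icc 1 G.nv) := fun _ hp ↦
  iff_of_true (v_mem_Icc (hG.fst_mem_Icc hp)) (v_mem_Icc (hG.snd_mem_Icc hp))

theorem Isolated.union (hI : G.Isolated I) (hJ : G.Isolated J) : G.Isolated (I ∪ J) :=
  fun p hp ↦ by rw [mem_union, mem_union, hI p hp, hJ p hp]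

theorem Isolated.sdiff (hI : G.Isolated I) (hJ : G.Isolated J) : G.Isolated (I \ J) :=
  fun p hp ↦ by rw [mem_sdiff, mem_sdiff, hI p hp, hJ p hp]

theorem Isolated.fst_mem_HI_iff (hI : G.Isolated I) (hG : G.Valid) (hp : p ∈ G.ed) :
    p.1 ∈ G.HI I ↔ p.2 ∈ G.HI I := by
  rw [mem_HI (hG.fst_mem_Icc hp), mem_HI (hG.snd_mem_Icc hp), hI p hp]

theorem isolated_sub (hG : G.Valid) (hKI : K ⊆ I) (hI : 0 ∉ I) (hiso : G.Isolated I) :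
    (G.sub I).Isolated (K.image (rankIn I)) ↔ G.Isolated K := by
  have hv {k : ℕ} (hk : k ∈ G.HI I) :
      (G.sub I).v (G.phi I k) ∈ K.image (rankIn I) ↔ G.v k ∈ K := by
    rw [v_sub hI hk, rankIn_mem_image_iff hKI (mem_filter.1 hk).2]
  rw [Isolated, ed_sub hG, forall_mem_image]
  refine ⟨fun h p hp ↦ ?_, fun h p hp ↦ ?_⟩
  · by_cases hpI : p.1 ∈ G.HI I
    · have hpI' := (hiso.fst_mem_HI_iff hG hp).1 hpI
      have := h (mem_inter.2 ⟨hp, mem_product.2 ⟨hpI, hpI'⟩⟩)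
      rwa [Prod.map_fst, Prod.map_snd, hv hpI, hv hpI'] at this
    · rw [mem_HI (hG.fst_mem_Icc hp)] at hpI
      exact iff_of_false (fun h ↦ hpI (hKI h)) fun h ↦ hpI ((hiso p hp).2 (hKI h))
  · obtain ⟨hp, hpI⟩ := mem_inter.1 hp
    rw [mem_product] at hpI
    rw [Prod.map_fst, Prod.map_snd, hv hpI.1, hv hpI.2]
    exact h p hp

theorem image_fst_ed_sub (hG : G.Valid) (hiso : G.Isolated I) :
    (G.sub I).ed.image Prod.fst = (G.ed.image Prod.fst ∩ G.HI I).image (G.phi I) := by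
  rw [ed_sub hG]
  refine Eq.symm <| image_inter_image_comm (fun p hp ↦ ?_) fun _ _ _ ↦ rfl
  rw [mem_product, ← hiso.fst_mem_HI_iff hG hp, and_self]

theorem image_snd_ed_sub (hG : G.Valid) (hiso : G.Isolated I) :
    (G.sub I).ed.image Prod.snd = (G.ed.image Prod.snd ∩ G.HI I).image (G.phi I) := by
  rw [ed_sub hG]
  refine Eq.symm <| image_inter_image_comm (fun p hp ↦ ?_) fun _ _ _ ↦ rfl
  rw [mem_product, hiso.fst_mem_HI_iff hG hp, and_self]

theorem HfUp_sub (hG : G.Valid) (hiso : G.Isolated I) :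
    (G.sub I).HfUp = (G.HfUp ∩ G.HI I).image (G.phi I) := by
  rw [HfUp, image_fst_ed_sub hG hiso]
  exact image_inter_sdiff_image_inter (injOn_phi G I)

theorem HfDn_sub (hG : G.Valid) (hiso : G.Isolated I) :
    (G.sub I).HfDn = (G.HfDn ∩ G.HI I).image (G.phi I) := by
  rw [HfDn, image_snd_ed_sub hG hiso]
  exact image_inter_sdiff_image_inter (injOn_phi G I)

end Isolated

section Comp

theorem omega_comp (A B : BD) (s : Finset (ℕ × ℕ)) :
    (A.comp B s).omega = A.omega + B.omega := List.sum_append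

theorem nv_comp (A B : BD) (s : Finset (ℕ × ℕ)) : (A.comp B s).nv = A.nv + B.nv :=
  List.length_append

theorem v_comp_of_le (s : Finset (ℕ × ℕ)) (hk : k ≤ A.omega) : (A.comp B s).v k = A.v k :=
  blockAt_append_of_le hk

theorem v_comp_add (s : Finset (ℕ × ℕ)) (hk : 0 < k) :
    (A.comp B s).v (k + A.omega) = B.v k + A.nv := blockAt_append_add hk

theorem up_comp (A B : BD) (s : Finset (ℕ × ℕ)) :
    (A.comp B s).up = glue A.omega A.up B.up := rfl

theorem dn_comp (A B : BD) (s : Finset (ℕ × ℕ)) :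
    (A.comp B s).dn = glue A.omega A.dn B.dn := rfl

theorem matchings_eq_partialMatchings (A B : BD) :
    A.matchings B = partialMatchings (A.HfUp ×ˢ B.HfDn) := by
  classical
  ext s
  rw [matchings, Finset.mem_filter, mem_partialMatchings, mem_powerset, isPartialMatching_iff]
  exact and_congr_right fun hs ↦ and_iff_right fun p hp ↦ mem_product.1 (hs hp)

theorem mem_matchings : s ∈ A.matchings B ↔ s ⊆ A.HfUp ×ˢ B.HfDn ∧ IsPartialMatching s := by
  rw [matchings_eq_partialMatchings, mem_partialMatchings]

theorem ed_comp_eq (A B : BD) (s : Finset (ℕ × ℕ)) : (A.comp B s).ed =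
    A.ed ∪ s.image (Prod.map id (· + A.omega)) ∪
      B.ed.image (Prod.map (· + A.omega) (· + A.omega)) := rfl

theorem image_fst_ed_comp (A B : BD) (s : Finset (ℕ × ℕ)) : (A.comp B s).ed.image Prod.fst =
    glue A.omega (A.ed.image Prod.fst ∪ s.image Prod.fst) (B.ed.image Prod.fst) := by
  simp only [ed_comp_eq, image_union, image_fst_image_prodMap, image_id, glue]

theorem image_snd_ed_comp (A B : BD) (s : Finset (ℕ × ℕ)) : (A.comp B s).ed.image Prod.snd =
    glue A.omega (A.ed.image Prod.snd) (s.image Prod.snd ∪ B.ed.image Prod.snd) := by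
  simp only [ed_comp_eq, image_union, image_snd_image_prodMap, glue, union_assoc]

theorem fst_mem_of_mem_matchings (hs : s ∈ A.matchings B) (hp : p ∈ s) : p.1 ∈ A.HfUp :=
  (mem_product.1 ((mem_matchings.1 hs).1 hp)).1

theorem snd_mem_of_mem_matchings (hs : s ∈ A.matchings B) (hp : p ∈ s) : p.2 ∈ B.HfDn :=
  (mem_product.1 ((mem_matchings.1 hs).1 hp)).2

theorem image_fst_subset_of_mem_matchings (hs : s ∈ A.matchings B) :
    s.image Prod.fst ⊆ A.HfUp := image_subset_iff.2 fun _ ↦ fst_mem_of_mem_matchings hs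

theorem image_snd_subset_of_mem_matchings (hs : s ∈ A.matchings B) :
    s.image Prod.snd ⊆ B.HfDn := image_subset_iff.2 fun _ ↦ snd_mem_of_mem_matchings hs

theorem HfUp_comp (hA : A.Valid) (hB : B.Valid) (hs : s ∈ A.matchings B) :
    (A.comp B s).HfUp = glue A.omega (A.HfUp \ s.image Prod.fst) B.HfUp := by
  have hs₁ : s.image Prod.fst ⊆ Icc 1 A.omega :=
    (image_fst_subset_of_mem_matchings hs).trans hA.HfUp_subset
  rw [HfUp, image_fst_ed_comp, up_comp,
    glue_sdiff_glue hA.up_subset (union_subset hA.image_fst_ed_subset hs₁)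
      (zero_notMem_of_subset_Icc hB.up_subset) (zero_notMem_of_subset_Icc hB.image_fst_ed_subset),
    HfUp, HfUp, _root_.sdiff_sdiff, sup_eq_union]

theorem HfDn_comp (hA : A.Valid) (hB : B.Valid) (hs : s ∈ A.matchings B) :
    (A.comp B s).HfDn = glue A.omega A.HfDn (B.HfDn \ s.image Prod.snd) := by
  have hs₂ : s.image Prod.snd ⊆ Icc 1 B.omega :=
    (image_snd_subset_of_mem_matchings hs).trans hB.HfDn_subset
  rw [HfDn, image_snd_ed_comp, dn_comp,
    glue_sdiff_glue hA.dn_subset hA.image_snd_ed_subset (zero_notMem_of_subset_Icc hB.dn_subset)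
      (zero_notMem_of_subset_Icc (union_subset hs₂ hB.image_snd_ed_subset)),
    HfDn, HfDn, union_comm, _root_.sdiff_sdiff, sup_eq_union]

theorem isPartialMatching_ed_comp (hA : A.Valid) (hB : B.Valid) (hs : s ∈ A.matchings B) :
    IsPartialMatching (A.comp B s).ed := by
  have hs₁ := image_fst_subset_of_mem_matchings hs
  have hs₂ := image_snd_subset_of_mem_matchings hs
  have hinj : Function.Injective (· + A.omega) := add_left_injective _
  have hAs : IsPartialMatching (A.ed ∪ s.image (Prod.map id (· + A.omega))) := by
    refine hA.isPartialMatching_ed.union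
      ((isPartialMatching_image Function.injective_id.injOn hinj.injOn).2
        (mem_matchings.1 hs).2) ?_ ?_
    · rw [image_fst_image_prodMap, image_id]
      exact disjoint_sdiff.mono_right hs₁
    · rw [image_snd_image_prodMap]
      exact disjoint_image_add hA.image_snd_ed_subset
        (zero_notMem_of_subset_Icc (hs₂.trans hB.HfDn_subset))
  rw [ed_comp_eq]
  refine hAs.union ((isPartialMatching_image hinj.injOn hinj.injOn).2 hB.isPartialMatching_ed) ?_ ?_
  · rw [image_union, image_fst_image_prodMap, image_fst_image_prodMap, image_id]
    exact disjoint_image_add (union_subset hA.image_fst_ed_subset (hs₁.trans hA.HfUp_subset))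
      (zero_notMem_of_subset_Icc hB.image_fst_ed_subset)
  · rw [image_union, image_snd_image_prodMap, image_snd_image_prodMap, disjoint_union_left,
      disjoint_image hinj]
    exact ⟨disjoint_image_add hA.image_snd_ed_subset
      (zero_notMem_of_subset_Icc hB.image_snd_ed_subset), disjoint_sdiff.symm.mono_left hs₂⟩

theorem comp_valid (hA : A.Valid) (hB : B.Valid) (hs : s ∈ A.matchings B) :
    (A.comp B s).Valid := by
  refine ⟨?_, ?_, ?_, ?_, isPartialMatching_iff.1 (isPartialMatching_ed_comp hA hB hs)⟩
  · exact fun x hx ↦ (List.mem_append.1 hx).elim (hA.1 x) (hB.1 x)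
  · exact omega_comp A B s ▸ glue_subset_Icc hA.up_subset hB.up_subset
  · exact omega_comp A B s ▸ glue_subset_Icc hA.dn_subset hB.dn_subset
  simp only [ed_comp_eq, mem_union, mem_image, up_comp, dn_comp]
  rintro _ ((hp | ⟨p, hp, rfl⟩) | ⟨p, hp, rfl⟩)
  · obtain ⟨h₁, h₂, hlt⟩ := hA.2.2.2.1 _ hp
    refine ⟨mem_union_left _ h₁, mem_union_left _ h₂, ?_⟩
    rwa [v_comp_of_le s (mem_Icc.1 (hA.fst_mem_Icc hp)).2,
      v_comp_of_le s (mem_Icc.1 (hA.snd_mem_Icc hp)).2]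
  · have h₁ := fst_mem_of_mem_matchings hs hp
    have h₂ := snd_mem_of_mem_matchings hs hp
    refine ⟨mem_union_left _ (sdiff_subset h₁),
      mem_union_right _ (mem_image_of_mem _ (sdiff_subset h₂)), ?_⟩
    have hv₁ := mem_Icc.1 (v_mem_Icc (hA.HfUp_subset h₁))
    have hv₂ := mem_Icc.1 (v_mem_Icc (hB.HfDn_subset h₂))
    simp only [Prod.map_fst, Prod.map_snd, id]
    rw [v_comp_of_le s (mem_Icc.1 (hA.HfUp_subset h₁)).2,
      v_comp_add s (mem_Icc.1 (hB.HfDn_subset h₂)).1]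
    lia
  · obtain ⟨h₁, h₂, hlt⟩ := hB.2.2.2.1 _ hp
    refine ⟨mem_union_right _ (mem_image_of_mem _ h₁),
      mem_union_right _ (mem_image_of_mem _ h₂), ?_⟩
    simp only [Prod.map_fst, Prod.map_snd]
    rw [v_comp_add s (mem_Icc.1 (hB.fst_mem_Icc hp)).1,
      v_comp_add s (mem_Icc.1 (hB.snd_mem_Icc hp)).1]
    exact Nat.add_lt_add_right hlt _

end Comp

section Assoc

theorem comp_assoc (A B C : BD) (s u r : Finset (ℕ × ℕ)) :
    (A.comp B s).comp C (r ∪ u.image (Prod.map (· + A.omega) id)) =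
      A.comp (B.comp C u) (s ∪ r.image (Prod.map id (· + B.omega))) := by
  refine BD.ext (List.append_assoc _ _ _) ?_ ?_ ?_
  · simp only [up_comp, omega_comp, glue_assoc]
  · simp only [dn_comp, omega_comp, glue_assoc]
  · have hadd : (· + A.omega) ∘ (· + B.omega) = (· + (A.omega + B.omega)) := by
      funext k
      simp only [Function.comp_apply]
      lia
    simp only [ed_comp_eq, omega_comp, image_union, image_image, Prod.map_comp_map, hadd,
      Function.id_comp, Function.comp_id, union_assoc]
    ac_rfl

theorem sum_matchings_comp_left {M : Type*} [AddCommMonoid M] (hA : A.Valid) (hB : B.Valid)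
    (hs : s ∈ A.matchings B) (F : Finset (ℕ × ℕ) → M) :
    ∑ t ∈ (A.comp B s).matchings C, F t =
      ∑ u ∈ B.matchings C,
        ∑ r ∈ partialMatchings ((A.HfUp \ s.image Prod.fst) ×ˢ (C.HfDn \ u.image Prod.snd)),
          F (r ∪ u.image (Prod.map (· + A.omega) id)) := by
  have hdisj : Disjoint (A.HfUp \ s.image Prod.fst) (B.HfUp.image (· + A.omega)) :=
    disjoint_image_add (sdiff_subset.trans hA.HfUp_subset)
      (zero_notMem_of_subset_Icc hB.HfUp_subset)
  have himage : B.HfUp.image (· + A.omega) ×ˢ C.HfDn =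
      (B.HfUp ×ˢ C.HfDn).image (Prod.map (· + A.omega) id) := by
    rw [prodMap_image_product, image_id]
  rw [matchings_eq_partialMatchings, HfUp_comp hA hB hs, glue, union_product,
    sum_partialMatchings_product_union (disjoint_product.2 (Or.inl hdisj)), himage,
    sum_partialMatchings_image (add_left_injective _).injOn Function.injective_id.injOn,
    ← matchings_eq_partialMatchings]
  refine sum_congr rfl fun u hu ↦ ?_
  rw [image_fst_image_prodMap, image_snd_image_prodMap, image_id,
    (hdisj.mono_right (image_subset_image (image_fst_subset_of_mem_matchings hu))).sdiff_eq_left]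

theorem sum_matchings_comp_right {M : Type*} [AddCommMonoid M] (hB : B.Valid) (hC : C.Valid)
    (hu : u ∈ B.matchings C) (F : Finset (ℕ × ℕ) → M) :
    ∑ t ∈ A.matchings (B.comp C u), F t =
      ∑ s ∈ A.matchings B,
        ∑ r ∈ partialMatchings ((A.HfUp \ s.image Prod.fst) ×ˢ (C.HfDn \ u.image Prod.snd)),
          F (s ∪ r.image (Prod.map id (· + B.omega))) := by
  have hdisj : Disjoint B.HfDn ((C.HfDn \ u.image Prod.snd).image (· + B.omega)) :=
    disjoint_image_add hB.HfDn_subset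
      (zero_notMem_of_subset_Icc (sdiff_subset.trans hC.HfDn_subset))
  rw [matchings_eq_partialMatchings, HfDn_comp hB hC hu, glue, product_union, union_comm,
    sum_partialMatchings_product_union (disjoint_product.2 (Or.inr hdisj.symm)),
    ← matchings_eq_partialMatchings]
  refine sum_congr rfl fun s hs ↦ ?_
  have himage : (A.HfUp \ s.image Prod.fst) ×ˢ (C.HfDn \ u.image Prod.snd).image (· + B.omega) =
      ((A.HfUp \ s.image Prod.fst) ×ˢ (C.HfDn \ u.image Prod.snd)).image
        (Prod.map id (· + B.omega)) := by
    rw [prodMap_image_product, image_id]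
  rw [(hdisj.symm.mono_right (image_snd_subset_of_mem_matchings hs)).sdiff_eq_left, himage,
    sum_partialMatchings_image Function.injective_id.injOn (add_left_injective _).injOn]
  exact sum_congr rfl fun r _ ↦ by rw [union_comm]

theorem sum_comp_assoc {M : Type*} [AddCommMonoid M] (hA : A.Valid) (hB : B.Valid) (hC : C.Valid)
    (F : BD → M) :
    ∑ s ∈ A.matchings B, ∑ t ∈ (A.comp B s).matchings C, F ((A.comp B s).comp C t) =
      ∑ u ∈ B.matchings C, ∑ t ∈ A.matchings (B.comp C u), F (A.comp (B.comp C u) t) := by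
  rw [sum_congr rfl fun s hs ↦ sum_matchings_comp_left hA hB hs _,
    sum_congr rfl fun u hu ↦ sum_matchings_comp_right hB hC hu _, sum_comm]
  simp only [comp_assoc]

end Assoc

section SubComp

theorem HI_comp (s : Finset (ℕ × ℕ)) (hI : I ⊆ Icc 1 A.nv) (hJ : 0 ∉ J) :
    (A.comp B s).HI (glue A.nv I J) = glue A.omega (A.HI I) (B.HI J) :=
  blockPositions_append_glue hI hJ

theorem mem_HI_comp_of_le (s : Finset (ℕ × ℕ)) (hI : I ⊆ Icc 1 A.nv) (hJ : 0 ∉ J)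
    (hk : k ≤ A.omega) : k ∈ (A.comp B s).HI (glue A.nv I J) ↔ k ∈ A.HI I := by
  rw [HI_comp s hI hJ, mem_glue_of_le (zero_notMem_HI B J) hk]

theorem mem_HI_comp_add (s : Finset (ℕ × ℕ)) (hI : I ⊆ Icc 1 A.nv) (hJ : 0 ∉ J) (hk : 0 < k) :
    k + A.omega ∈ (A.comp B s).HI (glue A.nv I J) ↔ k ∈ B.HI J := by
  rw [HI_comp s hI hJ, add_mem_glue (HI_subset A I) hk]

theorem phi_comp_of_le (s : Finset (ℕ × ℕ)) (hI : I ⊆ Icc 1 A.nv) (hJ : 0 ∉ J)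
    (hk : k ≤ A.omega) : (A.comp B s).phi (glue A.nv I J) k = A.phi I k := by
  rw [phi_eq_rankIn, HI_comp s hI hJ, rankIn_glue_of_le (zero_notMem_HI B J) hk, phi_eq_rankIn]

theorem phi_comp_add (s : Finset (ℕ × ℕ)) (hI : I ⊆ Icc 1 A.nv) (hJ : 0 ∉ J) (k : ℕ) :
    (A.comp B s).phi (glue A.nv I J) (k + A.omega) = B.phi J k + (A.sub I).omega := by
  rw [phi_eq_rankIn, HI_comp s hI hJ, rankIn_glue_add (HI_subset A I) (zero_notMem_HI B J),
    phi_eq_rankIn, omega_sub]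

/-- The part of a matching between the half-edges of `A` and those of `B` that lies between the
vertices in `I` and those in `J`, relabelled as a matching between `A.sub I` and `B.sub J`. -/
def restrictMatching (A B : BD) (I J : Finset ℕ) (s : Finset (ℕ × ℕ)) : Finset (ℕ × ℕ) :=
  (s ∩ A.HI I ×ˢ B.HI J).image (Prod.map (A.phi I) (B.phi J))

theorem image_phi_glue_inter_HI (s : Finset (ℕ × ℕ)) (hI : I ⊆ Icc 1 A.nv) (hJ : 0 ∉ J)
    (hX : X ⊆ Icc 1 A.omega) (hY : 0 ∉ Y) :
    (glue A.omega X Y ∩ (A.comp B s).HI (glue A.nv I J)).image ((A.comp B s).phi (glue A.nv I J)) =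
      glue (A.sub I).omega ((X ∩ A.HI I).image (A.phi I)) ((Y ∩ B.HI J).image (B.phi J)) := by
  have hleft := image_inter_image_comm (X := X) (e := id) (e' := id) (f := A.phi I)
    (f' := (A.comp B s).phi (glue A.nv I J)) (H := A.HI I)
    (fun x hx ↦ mem_HI_comp_of_le (B := B) s hI hJ (mem_Icc.1 (hX hx)).2)
    fun x hx _ ↦ phi_comp_of_le (B := B) s hI hJ (mem_Icc.1 (hX hx)).2
  have hright := image_inter_image_comm (X := Y) (e := (· + A.omega)) (e' := (· + (A.sub I).omega))
    (f := B.phi J) (f' := (A.comp B s).phi (glue A.nv I J)) (H := B.HI J)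
    (fun x hx ↦ mem_HI_comp_add s hI hJ (Nat.pos_of_ne_zero (ne_of_mem_of_not_mem hx hY)))
    fun x _ _ ↦ phi_comp_add s hI hJ x
  rw [image_id, image_id] at hleft
  rw [glue.eq_def A.omega X Y, union_inter_distrib_right, image_union, hleft, hright, glue]

theorem ed_sub_comp (hA : A.Valid) (hB : B.Valid) (hs : s ∈ A.matchings B) (hI : I ⊆ Icc 1 A.nv)
    (hJ : 0 ∉ J) : ((A.comp B s).sub (glue A.nv I J)).ed =
      ((A.sub I).comp (B.sub J) (restrictMatching A B I J s)).ed := by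
  let φ := (A.comp B s).phi (glue A.nv I J)
  have hle {k : ℕ} (hk : k ∈ Icc 1 A.omega) :
      (k ∈ (A.comp B s).HI (glue A.nv I J) ↔ k ∈ A.HI I) ∧ φ k = A.phi I k :=
    ⟨mem_HI_comp_of_le s hI hJ (mem_Icc.1 hk).2, phi_comp_of_le s hI hJ (mem_Icc.1 hk).2⟩
  have hadd {k : ℕ} (hk : k ∈ Icc 1 B.omega) :
      (k + A.omega ∈ (A.comp B s).HI (glue A.nv I J) ↔ k ∈ B.HI J) ∧
        φ (k + A.omega) = B.phi J k + (A.sub I).omega :=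
    ⟨mem_HI_comp_add s hI hJ (mem_Icc.1 hk).1, phi_comp_add s hI hJ k⟩
  have hedA := image_prodMap_inter_product_comm (e₁ := id) (e₂ := id) (e₁' := id) (e₂' := id)
    (f₁' := φ) (f₂' := φ) (f₁ := A.phi I) (f₂ := A.phi I) (fun _ hp ↦ hle (hA.fst_mem_Icc hp))
    fun _ hp ↦ hle (hA.snd_mem_Icc hp)
  have heds := image_prodMap_inter_product_comm (e₁ := id) (e₂ := (· + A.omega)) (e₁' := id)
    (e₂' := (· + (A.sub I).omega)) (f₁' := φ) (f₂' := φ) (f₁ := A.phi I) (f₂ := B.phi J)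
    (fun _ hp ↦ hle (hA.HfUp_subset (fst_mem_of_mem_matchings hs hp)))
    fun _ hp ↦ hadd (hB.HfDn_subset (snd_mem_of_mem_matchings hs hp))
  have hedB := image_prodMap_inter_product_comm (e₁ := (· + A.omega)) (e₂ := (· + A.omega))
    (e₁' := (· + (A.sub I).omega)) (e₂' := (· + (A.sub I).omega)) (f₁' := φ) (f₂' := φ)
    (f₁ := B.phi J) (f₂ := B.phi J) (fun _ hp ↦ hadd (hB.fst_mem_Icc hp))
    fun _ hp ↦ hadd (hB.snd_mem_Icc hp)
  rw [Prod.map_id, image_id, image_id] at hedA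
  rw [ed_sub (comp_valid hA hB hs), ed_comp_eq, union_inter_distrib_right,
    union_inter_distrib_right, image_union, image_union, hedA, heds, hedB, ed_comp_eq, ed_sub hA,
    ed_sub hB, restrictMatching]

theorem sub_comp (hA : A.Valid) (hB : B.Valid) (hs : s ∈ A.matchings B) (hI : I ⊆ Icc 1 A.nv)
    (hJ : 0 ∉ J) :
    (A.comp B s).sub (glue A.nv I J) = (A.sub I).comp (B.sub J) (restrictMatching A B I J s) := by
  have hhalf {X Y : Finset ℕ} (hX : X ⊆ Icc 1 A.omega) (hY : Y ⊆ Icc 1 B.omega) :=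
    image_phi_glue_inter_HI (B := B) s hI hJ hX (zero_notMem_of_subset_Icc hY)
  exact BD.ext (selectBlocks_append_glue hI hJ) (hhalf hA.up_subset hB.up_subset)
    (hhalf hA.dn_subset hB.dn_subset) (ed_sub_comp hA hB hs hI hJ)

theorem isolated_comp (hA : A.Valid) (hB : B.Valid) (hs : s ∈ A.matchings B)
    (hI : I ⊆ Icc 1 A.nv) (hJ : 0 ∉ J) :
    (A.comp B s).Isolated (glue A.nv I J) ↔
      A.Isolated I ∧ B.Isolated J ∧ ∀ p ∈ s, p.1 ∈ A.HI I ↔ p.2 ∈ B.HI J := by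
  have hle {k : ℕ} (hk : k ∈ Icc 1 A.omega) :
      (A.comp B s).v k ∈ glue A.nv I J ↔ A.v k ∈ I := by
    rw [v_comp_of_le s (mem_Icc.1 hk).2, mem_glue_of_le hJ (mem_Icc.1 (v_mem_Icc hk)).2]
  have hadd {k : ℕ} (hk : k ∈ Icc 1 B.omega) :
      (A.comp B s).v (k + A.omega) ∈ glue A.nv I J ↔ B.v k ∈ J := by
    rw [v_comp_add s (mem_Icc.1 hk).1, add_mem_glue hI (mem_Icc.1 (v_mem_Icc hk)).1]
  rw [Isolated, ed_comp_eq, forall_mem_union, forall_mem_union, forall_mem_image, forall_mem_image,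
    and_assoc, and_comm (a := ∀ p ∈ s, _)]
  refine and_congr (forall₂_congr fun p hp ↦ ?_)
    (and_congr (forall₂_congr fun p hp ↦ ?_) (forall₂_congr fun p hp ↦ ?_))
  · rw [hle (hA.fst_mem_Icc hp), hle (hA.snd_mem_Icc hp)]
  · rw [Prod.map_fst, Prod.map_snd, hadd (hB.fst_mem_Icc hp), hadd (hB.snd_mem_Icc hp)]
  · have h₁ := hA.HfUp_subset (fst_mem_of_mem_matchings hs hp)
    have h₂ := hB.HfDn_subset (snd_mem_of_mem_matchings hs hp)
    rw [Prod.map_fst, Prod.map_snd, id, hle h₁, hadd h₂, mem_HI h₁, mem_HI h₂]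

end SubComp

section IsolatedSets

open scoped Classical in
/-- The sets of vertices over which the coproduct of `G` is summed. -/
noncomputable def isolatedSets (G : BD) : Finset (Finset ℕ) :=
  {I ∈ (Icc 1 G.nv).powerset | G.Isolated I}

theorem mem_isolatedSets : I ∈ G.isolatedSets ↔ I ⊆ Icc 1 G.nv ∧ G.Isolated I := by
  simp [isolatedSets]

theorem compl_mem_isolatedSets (hG : G.Valid) (hI : I ∈ G.isolatedSets) :
    Icc 1 G.nv \ I ∈ G.isolatedSets :=
  mem_isolatedSets.2 ⟨sdiff_subset, (isolated_Icc_nv hG).sdiff (mem_isolatedSets.1 hI).2⟩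

theorem Valid.sub (hG : G.Valid) (hI : I ∈ G.isolatedSets) : (G.sub I).Valid :=
  sub_valid hG (zero_notMem_of_subset_Icc (mem_isolatedSets.1 hI).1)

theorem Valid.sub_compl (hG : G.Valid) (hI : I ∈ G.isolatedSets) :
    (G.sub (Icc 1 G.nv \ I)).Valid := hG.sub (compl_mem_isolatedSets hG hI)

theorem HI_compl (G : BD) (I : Finset ℕ) :
    G.HI (Icc 1 G.nv \ I) = Icc 1 G.omega \ G.HI I := by
  ext k
  rw [mem_sdiff, HI, HI, mem_filter, mem_filter, mem_sdiff]
  have := v_mem_Icc (G := G) (k := k)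
  tauto

theorem sum_isolatedSets_comp {M : Type*} [AddCommMonoid M] (hA : A.Valid) (hB : B.Valid)
    (hs : s ∈ A.matchings B) (F : Finset ℕ → M) :
    ∑ K ∈ (A.comp B s).isolatedSets, F K = ∑ I ∈ A.isolatedSets, ∑ J ∈ B.isolatedSets,
      if ∀ p ∈ s, p.1 ∈ A.HI I ↔ p.2 ∈ B.HI J then F (glue A.nv I J) else 0 := by
  classical
  simp only [isolatedSets]
  rw [sum_filter, nv_comp, sum_powerset_Icc_add, sum_filter]
  refine sum_congr rfl fun I hI ↦ ?_
  have hiso {J : Finset ℕ} (hJ : J ∈ (Icc 1 B.nv).powerset) :=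
    isolated_comp hA hB hs (mem_powerset.1 hI) (zero_notMem_of_subset_Icc (mem_powerset.1 hJ))
  split_ifs with hAI
  · rw [sum_filter]
    refine sum_congr rfl fun J hJ ↦ ?_
    simp only [hiso hJ, hAI, true_and, ite_and]
  · exact sum_eq_zero fun J hJ ↦ if_neg fun h ↦ hAI ((hiso hJ).1 h).1

theorem sum_matchings_sub {M : Type*} [AddCommMonoid M] (hA : A.Valid) (hB : B.Valid)
    (hI : A.Isolated I) (hJ : B.Isolated J) (F : Finset (ℕ × ℕ) → M) :
    ∑ t ∈ (A.sub I).matchings (B.sub J), F t =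
      ∑ s ∈ partialMatchings ((A.HfUp ∩ A.HI I) ×ˢ (B.HfDn ∩ B.HI J)),
        F (s.image (Prod.map (A.phi I) (B.phi J))) := by
  rw [matchings_eq_partialMatchings, HfUp_sub hA hI, HfDn_sub hB hJ, ← prodMap_image_product,
    sum_partialMatchings_image]
  · refine (injOn_phi A I).mono ?_
    rintro _ ⟨p, hp, rfl⟩
    exact (mem_inter.1 (mem_product.1 hp).1).2
  · refine (injOn_phi B J).mono ?_
    rintro _ ⟨p, hp, rfl⟩
    exact (mem_inter.1 (mem_product.1 hp).2).2

theorem disjoint_HI_compl (G : BD) (I : Finset ℕ) :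
    Disjoint (G.HI I) (G.HI (Icc 1 G.nv \ I)) := HI_compl G I ▸ disjoint_sdiff

theorem filter_matchings_eq_partialMatchings (hA : A.Valid) (hB : B.Valid) (I J : Finset ℕ) :
    {s ∈ A.matchings B | ∀ p ∈ s, p.1 ∈ A.HI I ↔ p.2 ∈ B.HI J} =
      partialMatchings ((A.HfUp ∩ A.HI I) ×ˢ (B.HfDn ∩ B.HI J) ∪
        (A.HfUp ∩ A.HI (Icc 1 A.nv \ I)) ×ˢ (B.HfDn ∩ B.HI (Icc 1 B.nv \ J))) := by
  have hmem (p : ℕ × ℕ) : p ∈ (A.HfUp ∩ A.HI I) ×ˢ (B.HfDn ∩ B.HI J) ∪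
      (A.HfUp ∩ A.HI (Icc 1 A.nv \ I)) ×ˢ (B.HfDn ∩ B.HI (Icc 1 B.nv \ J)) ↔
        p ∈ A.HfUp ×ˢ B.HfDn ∧ (p.1 ∈ A.HI I ↔ p.2 ∈ B.HI J) := by
    have h₁ : p.1 ∈ A.HfUp → p.1 ∈ Icc 1 A.omega := fun h ↦ hA.HfUp_subset h
    have h₂ : p.2 ∈ B.HfDn → p.2 ∈ Icc 1 B.omega := fun h ↦ hB.HfDn_subset h
    simp only [mem_union, mem_product, mem_inter, HI_compl, mem_sdiff]
    tauto
  ext s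
  rw [mem_filter, mem_matchings, mem_partialMatchings, and_right_comm]
  simp only [subset_iff (s₂ := _ ∪ _), hmem, forall_and, ← subset_iff]

theorem sum_matchings_restrictMatching {M : Type*} [AddCommMonoid M] (hA : A.Valid) (hB : B.Valid)
    (hI : I ∈ A.isolatedSets) (hJ : J ∈ B.isolatedSets)
    (F : Finset (ℕ × ℕ) → Finset (ℕ × ℕ) → M) :
    ∑ s ∈ A.matchings B with ∀ p ∈ s, p.1 ∈ A.HI I ↔ p.2 ∈ B.HI J,
      F (restrictMatching A B I J s)
        (restrictMatching A B (Icc 1 A.nv \ I) (Icc 1 B.nv \ J) s) =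
    ∑ t ∈ (A.sub I).matchings (B.sub J),
      ∑ t' ∈ (A.sub (Icc 1 A.nv \ I)).matchings (B.sub (Icc 1 B.nv \ J)), F t t' := by
  have hIc := compl_mem_isolatedSets hA hI
  have hJc := compl_mem_isolatedSets hB hJ
  have hdisjA := disjoint_HI_compl A I
  have hdisjB := disjoint_HI_compl B J
  rw [filter_matchings_eq_partialMatchings hA hB, sum_partialMatchings_union_of_disjoint
      (hdisjA.mono inter_subset_right inter_subset_right)
      (hdisjB.mono inter_subset_right inter_subset_right),
    sum_matchings_sub hA hB (mem_isolatedSets.1 hI).2 (mem_isolatedSets.1 hJ).2]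
  refine sum_congr rfl fun s hs ↦ ?_
  rw [sum_matchings_sub hA hB (mem_isolatedSets.1 hIc).2 (mem_isolatedSets.1 hJc).2]
  refine sum_congr rfl fun t ht ↦ ?_
  have hs' : s ⊆ A.HI I ×ˢ B.HI J := (mem_partialMatchings.1 hs).1.trans
    (product_subset_product inter_subset_right inter_subset_right)
  have ht' : t ⊆ A.HI (Icc 1 A.nv \ I) ×ˢ B.HI (Icc 1 B.nv \ J) :=
    (mem_partialMatchings.1 ht).1.trans
      (product_subset_product inter_subset_right inter_subset_right)
  have hdisj := disjoint_product.2 (Or.inl (b := Disjoint (B.HI J) (B.HI (Icc 1 B.nv \ J))) hdisjA)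
  rw [restrictMatching, restrictMatching, union_inter_distrib_right, union_inter_distrib_right,
    inter_eq_left.2 hs', inter_eq_left.2 ht',
    disjoint_iff_inter_eq_empty.1 (hdisj.symm.mono_left ht'),
    disjoint_iff_inter_eq_empty.1 (hdisj.mono_left hs'), union_empty, empty_union]

theorem sum_comp_isolatedSets {M : Type*} [AddCommMonoid M] (hA : A.Valid) (hB : B.Valid)
    (F : BD → BD → M) :
    ∑ s ∈ A.matchings B, ∑ K ∈ (A.comp B s).isolatedSets,
      F ((A.comp B s).sub K) ((A.comp B s).sub (Icc 1 (A.comp B s).nv \ K)) =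
    ∑ I ∈ A.isolatedSets, ∑ J ∈ B.isolatedSets,
      ∑ t ∈ (A.sub I).matchings (B.sub J),
        ∑ t' ∈ (A.sub (Icc 1 A.nv \ I)).matchings (B.sub (Icc 1 B.nv \ J)),
          F ((A.sub I).comp (B.sub J) t)
            ((A.sub (Icc 1 A.nv \ I)).comp (B.sub (Icc 1 B.nv \ J)) t') := by
  rw [sum_congr rfl fun s hs ↦ sum_isolatedSets_comp hA hB hs _, sum_comm]
  refine sum_congr rfl fun I hI ↦ ?_
  rw [sum_comm]
  refine sum_congr rfl fun J hJ ↦ ?_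
  rw [← sum_matchings_restrictMatching hA hB hI hJ
    fun t t' ↦ F ((A.sub I).comp (B.sub J) t)
      ((A.sub (Icc 1 A.nv \ I)).comp (B.sub (Icc 1 B.nv \ J)) t'), sum_filter]
  refine sum_congr rfl fun s hs ↦ ?_
  have hI := (mem_isolatedSets.1 hI).1
  have hJ := zero_notMem_of_subset_Icc (mem_isolatedSets.1 hJ).1
  have hJc := zero_notMem_of_subset_Icc (sdiff_subset (s := Icc 1 B.nv) (t := J))
  have hcompl : Icc 1 (A.comp B s).nv \ glue A.nv I J =
      glue A.nv (Icc 1 A.nv \ I) (Icc 1 B.nv \ J) := by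
    rw [nv_comp, ← glue_Icc, glue_sdiff_glue subset_rfl hI (by simp) hJ]
  rw [hcompl, sub_comp hA hB hs hI hJ, sub_comp hA hB hs sdiff_subset hJc]

end IsolatedSets

section Coassoc

variable {M : Type*} [AddCommMonoid M]

open scoped Classical in
theorem sum_isolatedSets_sub (hG : G.Valid) (hI : I ∈ G.isolatedSets) (F : BD → BD → M) :
    ∑ K ∈ (G.sub I).isolatedSets,
      F ((G.sub I).sub K) ((G.sub I).sub (Icc 1 (G.sub I).nv \ K)) =
    ∑ K ∈ I.powerset with G.Isolated K, F (G.sub K) (G.sub (I \ K)) := by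
  obtain ⟨hIN, hiso⟩ := mem_isolatedSets.1 hI
  have h0 := zero_notMem_of_subset_Icc hIN
  rw [isolatedSets, nv_sub hIN, ← image_rankIn, sum_filter,
    sum_powerset_image (rankIn_strictMonoOn I).injOn, sum_filter]
  refine sum_congr rfl fun K hK ↦ ?_
  have hKI := mem_powerset.1 hK
  rw [← image_sdiff_of_injOn (rankIn_strictMonoOn I).injOn hKI, sub_sub hG hKI h0,
    sub_sub hG sdiff_subset h0]
  simp only [isolated_sub hG hKI h0 hiso]

theorem sum_isolatedSets_coassoc (hG : G.Valid) (F : BD → BD → BD → M) :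
    ∑ I ∈ G.isolatedSets, ∑ K ∈ (G.sub I).isolatedSets,
      F ((G.sub I).sub K) ((G.sub I).sub (Icc 1 (G.sub I).nv \ K)) (G.sub (Icc 1 G.nv \ I)) =
    ∑ K ∈ G.isolatedSets, ∑ L ∈ (G.sub (Icc 1 G.nv \ K)).isolatedSets,
      F (G.sub K) ((G.sub (Icc 1 G.nv \ K)).sub L)
        ((G.sub (Icc 1 G.nv \ K)).sub (Icc 1 (G.sub (Icc 1 G.nv \ K)).nv \ L)) := by
  classical
  rw [sum_congr rfl fun I hI ↦ sum_isolatedSets_sub hG hI fun X Y ↦ F X Y _,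
    sum_congr rfl fun K hK ↦ sum_isolatedSets_sub hG (compl_mem_isolatedSets hG hK) (F (G.sub K)),
    isolatedSets]
  exact sum_powerset_sum_powerset_comm Isolated.union Isolated.sdiff (Icc 1 G.nv)
    fun K L J ↦ F (G.sub K) (G.sub L) (G.sub J)

end Coassoc

section Eps

theorem matchings_eps_left (G : BD) : eps.matchings G = {∅} := by
  rw [matchings_eq_partialMatchings, ← partialMatchings_empty]
  rfl

theorem matchings_eps_right (G : BD) : G.matchings eps = {∅} := by
  rw [matchings_eq_partialMatchings, ← partialMatchings_empty, ← product_empty G.HfUp]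
  rfl

theorem comp_eps_left (G : BD) : eps.comp G ∅ = G := by
  ext <;> simp [comp, eps, omega]

theorem comp_eps_right (G : BD) : G.comp eps ∅ = G := by
  ext <;> simp [comp, eps]

theorem isolatedSets_eps : eps.isolatedSets = {∅} := by
  ext I
  rw [mem_isolatedSets, mem_singleton]
  refine ⟨fun h ↦ by simpa [nv, eps] using h.1, ?_⟩
  rintro rfl
  exact ⟨empty_subset _, isolated_empty _⟩

end Eps

end BD

open BD

section Basis

variable {A B G : BD} {V : Type*} [AddCommMonoid V] [Module ℂ V]

theorem mkB_of_valid (hG : G.Valid) : mkB G = Finsupp.single ⟨G, hG⟩ 1 := dif_pos hG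

theorem mkB_eps : mkB eps = unitB := mkB_of_valid eps_valid

theorem liftB_mkB (f : BDiagram → V) (hG : G.Valid) : liftB f (mkB G) = f ⟨G, hG⟩ := by
  simp [liftB, mkB_of_valid hG]

theorem linearMap_ext_mkB {f g : BSpace →ₗ[ℂ] V}
    (h : ∀ G : BD, G.Valid → f (mkB G) = g (mkB G)) : f = g := by
  refine Finsupp.lhom_ext' fun A ↦ LinearMap.ext_ring ?_
  simpa [mkB_of_valid A.2] using h A.1 A.2

theorem bilinearMap_ext_mkB {f g : BSpace →ₗ[ℂ] BSpace →ₗ[ℂ] V}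
    (h : ∀ A B : BD, A.Valid → B.Valid → f (mkB A) (mkB B) = g (mkB A) (mkB B)) : f = g :=
  linearMap_ext_mkB fun A hA ↦ linearMap_ext_mkB fun B hB ↦ h A B hA hB

theorem starB_mkB (hA : A.Valid) (hB : B.Valid) :
    starB (mkB A) (mkB B) = ∑ s ∈ A.matchings B, mkB (A.comp B s) := by
  rw [starB, liftB_mkB _ hA, liftB_mkB _ hB, mulfun]

theorem deltaL_mkB (hG : G.Valid) :
    deltaL (mkB G) = ∑ I ∈ G.isolatedSets, mkB (G.sub I) ⊗ₜ[ℂ] mkB (G.sub (Icc 1 G.nv \ I)) :=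
  liftB_mkB dfun hG

theorem counitB_mkB (hG : G.Valid) : counitB (mkB G) = if G = eps then 1 else 0 :=
  liftB_mkB _ hG

end Basis

section Bialgebra

theorem starB_assoc (u v w : BSpace) : starB (starB u v) w = starB u (starB v w) := by
  have h : starB.compr₂ starB = (LinearMap.llcomp ℂ _ _ _ ∘ₗ starB).compl₂ starB := by
    refine bilinearMap_ext_mkB fun A B hA hB ↦ linearMap_ext_mkB fun C hC ↦ ?_
    change starB (starB (mkB A) (mkB B)) (mkB C) = starB (mkB A) (starB (mkB B) (mkB C))
    simp only [starB_mkB hA hB, starB_mkB hB hC, map_sum, LinearMap.sum_apply]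
    rw [sum_congr rfl fun s hs ↦ starB_mkB (comp_valid hA hB hs) hC,
      sum_congr rfl fun s hs ↦ starB_mkB hA (comp_valid hB hC hs)]
    exact sum_comp_assoc hA hB hC mkB
  exact LinearMap.congr_fun (LinearMap.congr_fun₂ h u v) w

theorem unitB_starB (u : BSpace) : starB unitB u = u := by
  refine LinearMap.congr_fun (g := LinearMap.id) (linearMap_ext_mkB fun G hG ↦ ?_) u
  rw [← mkB_eps, starB_mkB eps_valid hG, matchings_eps_left, sum_singleton, comp_eps_left,
    LinearMap.id_apply]

theorem starB_unitB (u : BSpace) : starB u unitB = u := by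
  refine LinearMap.congr_fun (f := starB.flip unitB) (g := LinearMap.id)
    (linearMap_ext_mkB fun G hG ↦ ?_) u
  rw [LinearMap.flip_apply, ← mkB_eps, starB_mkB hG eps_valid, matchings_eps_right, sum_singleton,
    comp_eps_right, LinearMap.id_apply]

theorem deltaL_coassoc : (TensorProduct.assoc ℂ BSpace BSpace BSpace).toLinearMap ∘ₗ
      TensorProduct.map deltaL LinearMap.id ∘ₗ deltaL =
    TensorProduct.map LinearMap.id deltaL ∘ₗ deltaL := by
  refine linearMap_ext_mkB fun G hG ↦ ?_
  simp only [LinearMap.comp_apply, deltaL_mkB hG, map_sum, TensorProduct.map_tmul,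
    LinearMap.id_apply, LinearEquiv.coe_coe]
  calc
    _ = ∑ I ∈ G.isolatedSets, ∑ K ∈ (G.sub I).isolatedSets, mkB ((G.sub I).sub K) ⊗ₜ[ℂ]
          (mkB ((G.sub I).sub (Icc 1 (G.sub I).nv \ K)) ⊗ₜ[ℂ] mkB (G.sub (Icc 1 G.nv \ I))) :=
      sum_congr rfl fun I hI ↦ by
        simp only [deltaL_mkB (hG.sub hI), TensorProduct.sum_tmul, map_sum,
          TensorProduct.assoc_tmul]
    _ = _ := sum_isolatedSets_coassoc hG fun X Y Z ↦ mkB X ⊗ₜ[ℂ] (mkB Y ⊗ₜ[ℂ] mkB Z)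
    _ = _ := sum_congr rfl fun K hK ↦ by
        rw [deltaL_mkB (hG.sub_compl hK), TensorProduct.tmul_sum]

theorem lid_comp_counitB_comp_deltaL : (TensorProduct.lid ℂ BSpace).toLinearMap ∘ₗ
    TensorProduct.map counitB LinearMap.id ∘ₗ deltaL = LinearMap.id := by
  refine linearMap_ext_mkB fun G hG ↦ ?_
  simp only [LinearMap.comp_apply, deltaL_mkB hG, map_sum, TensorProduct.map_tmul,
    LinearMap.id_apply, LinearEquiv.coe_coe, TensorProduct.lid_tmul]
  rw [sum_eq_single_of_mem ∅ (mem_isolatedSets.2 ⟨empty_subset _, isolated_empty G⟩)]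
  · rw [sub_empty hG, counitB_mkB eps_valid, if_pos rfl, one_smul, sdiff_empty, sub_Icc_nv hG]
  · intro I hI hne
    rw [counitB_mkB (hG.sub hI), if_neg, zero_smul]
    rwa [sub_eq_eps_iff hG (mem_isolatedSets.1 hI).1]

theorem rid_comp_counitB_comp_deltaL : (TensorProduct.rid ℂ BSpace).toLinearMap ∘ₗ
    TensorProduct.map LinearMap.id counitB ∘ₗ deltaL = LinearMap.id := by
  refine linearMap_ext_mkB fun G hG ↦ ?_
  simp only [LinearMap.comp_apply, deltaL_mkB hG, map_sum, TensorProduct.map_tmul,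
    LinearMap.id_apply, LinearEquiv.coe_coe, TensorProduct.rid_tmul]
  rw [sum_eq_single_of_mem (Icc 1 G.nv) (mem_isolatedSets.2 ⟨subset_rfl, isolated_Icc_nv hG⟩)]
  · rw [Finset.sdiff_self, sub_empty hG, counitB_mkB eps_valid, if_pos rfl, one_smul, sub_Icc_nv hG]
  · intro I hI hne
    rw [counitB_mkB (hG.sub_compl hI), if_neg, zero_smul]
    rw [sub_eq_eps_iff hG sdiff_subset, sdiff_eq_empty_iff_subset]
    exact fun h ↦ hne ((mem_isolatedSets.1 hI).1.antisymm h)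

theorem muB_tmul (u v : BSpace) : muB (u ⊗ₜ[ℂ] v) = starB u v := TensorProduct.lift.tmul u v

theorem star2_tmul (u v u' v' : BSpace) :
    star2 (u ⊗ₜ[ℂ] v) (u' ⊗ₜ[ℂ] v') = starB u u' ⊗ₜ[ℂ] starB v v' := by
  simp [star2, muB_tmul]

/-- The componentwise product `star2` of `ℬ ⊗ ℬ` as a bilinear map. -/
noncomputable def star2Bilin :
    BSpace ⊗[ℂ] BSpace →ₗ[ℂ] BSpace ⊗[ℂ] BSpace →ₗ[ℂ] BSpace ⊗[ℂ] BSpace :=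
  TensorProduct.curry <| TensorProduct.map muB muB ∘ₗ
    (TensorProduct.tensorTensorTensorComm ℂ BSpace BSpace BSpace BSpace).toLinearMap

theorem star2Bilin_apply (x y : BSpace ⊗[ℂ] BSpace) : star2Bilin x y = star2 x y := rfl

theorem deltaL_starB (u v : BSpace) : deltaL (starB u v) = star2 (deltaL u) (deltaL v) := by
  have h : starB.compr₂ deltaL = star2Bilin.compl₁₂ deltaL deltaL := by
    refine bilinearMap_ext_mkB fun A B hA hB ↦ ?_
    rw [LinearMap.compr₂_apply, LinearMap.compl₁₂_apply, starB_mkB hA hB, map_sum,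
      sum_congr rfl fun s hs ↦ deltaL_mkB (comp_valid hA hB hs),
      sum_comp_isolatedSets hA hB fun X Y ↦ mkB X ⊗ₜ[ℂ] mkB Y, deltaL_mkB hA, deltaL_mkB hB,
      LinearMap.map_sum₂]
    simp only [map_sum, star2Bilin_apply, star2_tmul]
    refine sum_congr rfl fun I hI ↦ sum_congr rfl fun J hJ ↦ ?_
    rw [starB_mkB (hA.sub hI) (hB.sub hJ), starB_mkB (hA.sub_compl hI) (hB.sub_compl hJ),
      TensorProduct.sum_tmul]
    simp only [TensorProduct.tmul_sum]
  exact LinearMap.congr_fun₂ h u v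

theorem deltaL_unitB : deltaL unitB = unitB ⊗ₜ[ℂ] unitB := by
  rw [← mkB_eps, deltaL_mkB eps_valid, isolatedSets_eps, sum_singleton, sub_empty eps_valid,
    sdiff_empty, sub_Icc_nv eps_valid]

theorem counitB_unitB : counitB unitB = 1 := by
  rw [← mkB_eps, counitB_mkB eps_valid, if_pos rfl]

theorem counitB_starB (u v : BSpace) : counitB (starB u v) = counitB u * counitB v := by
  have h : starB.compr₂ counitB = (LinearMap.mul ℂ ℂ).compl₁₂ counitB counitB := by
    refine bilinearMap_ext_mkB fun A B hA hB ↦ ?_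
    rw [LinearMap.compr₂_apply, LinearMap.compl₁₂_apply, LinearMap.mul_apply_apply]
    obtain rfl | hne := eq_or_ne A eps
    · rw [mkB_eps, unitB_starB, counitB_unitB, one_mul]
    · rw [starB_mkB hA hB, counitB_mkB hA, if_neg hne, zero_mul, map_sum]
      refine sum_eq_zero fun s hs ↦ ?_
      rw [counitB_mkB (comp_valid hA hB hs), if_neg]
      intro h
      have hnv : A.nv + B.nv = 0 := by rw [← nv_comp A B s, h]; rfl
      exact hne (hA.eq_eps (Nat.add_eq_zero_iff.1 hnv).1)
  exact LinearMap.congr_fun₂ h u v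

end Bialgebra

section Convolution

open WithConv LinearMap

variable {R C A : Type*} [CommSemiring R] [AddCommMonoid C] [Module R C] [Coalgebra R C] [Ring A]
  [Algebra R A] {f : WithConv (C →ₗ[R] A)}

/-- A linear map whose convolution powers eventually vanish at every point. -/
def IsLocallyNilpotent (f : WithConv (C →ₗ[R] A)) : Prop :=
  ∀ c, ∀ᶠ n in Filter.atTop, (f ^ n) c = 0

theorem IsLocallyNilpotent.exists_eventually_sum_eq (hf : IsLocallyNilpotent f) :
    ∃ S : WithConv (C →ₗ[R] A), ∀ c, ∀ᶠ n in Filter.atTop, (∑ i ∈ range n, f ^ i) c = S c := by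
  have hstab (c : C) : ∃ a, ∀ᶠ n in Filter.atTop, (∑ i ∈ range n, f ^ i).ofConv c = a := by
    obtain ⟨N, hN⟩ := Filter.eventually_atTop.1 (hf c)
    refine ⟨(∑ i ∈ range N, f ^ i).ofConv c, Filter.eventually_atTop.2 ⟨N, fun n hn ↦ ?_⟩⟩
    induction n, hn using Nat.le_induction with
    | base => rfl
    | succ n hn ih => rw [sum_range_succ, ofConv_add, LinearMap.add_apply, ih, hN n hn, add_zero]
  choose S hS using hstab
  refine ⟨toConv ⟨⟨S, fun c d ↦ ?_⟩, fun r c ↦ ?_⟩, hS⟩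
  · obtain ⟨n, hc, hd, hcd⟩ := ((hS c).and ((hS d).and (hS (c + d)))).exists
    rw [← hcd, map_add, hc, hd]
  · obtain ⟨n, hc, hrc⟩ := ((hS c).and (hS (r • c))).exists
    change S (r • c) = r • S c
    rw [← hrc, map_smul, hc]

theorem eventually_convMul_apply_eq {S : WithConv (C →ₗ[R] A)} {F : ℕ → WithConv (C →ₗ[R] A)}
    (hF : ∀ c, ∀ᶠ n in Filter.atTop, F n c = S c) (g : WithConv (C →ₗ[R] A)) (c : C) :
    ∀ᶠ n in Filter.atTop, (F n * g) c = (S * g) c ∧ (g * F n) c = (g * S) c := by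
  let 𝓡 := Coalgebra.Repr.arbitrary R c
  have hall := (Filter.eventually_all_finset 𝓡.index).2 fun i _ ↦
    (hF (𝓡.left i)).and (hF (𝓡.right i))
  filter_upwards [hall] with n hn
  simp only [𝓡.convMul_apply]
  exact ⟨sum_congr rfl fun i hi ↦ by rw [(hn i hi).1],
    sum_congr rfl fun i hi ↦ by rw [(hn i hi).2]⟩

theorem IsLocallyNilpotent.isUnit_one_sub (hf : IsLocallyNilpotent f) : IsUnit (1 - f) := by
  obtain ⟨S, hS⟩ := hf.exists_eventually_sum_eq
  refine isUnit_iff_exists.2 ⟨S, WithConv.ext <| LinearMap.ext fun c ↦ ?_,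
    WithConv.ext <| LinearMap.ext fun c ↦ ?_⟩
  all_goals
    obtain ⟨n, hn, hfn⟩ := ((eventually_convMul_apply_eq hS (1 - f) c).and (hf c)).exists
  · rw [← hn.2, mul_neg_geom_sum, ofConv_sub, LinearMap.sub_apply, hfn, sub_zero]
  · rw [← hn.1, geom_sum_mul_neg, ofConv_sub, LinearMap.sub_apply, hfn, sub_zero]

end Convolution

section Antipode

open WithConv

/-- `ℬ` with the product `⋆` and the coproduct `Δ`. It is a type synonym because Mathlib equips the
type `BSpace` of finitely supported functions with the pointwise product and coproduct. -/
def BAlgebra : Type := BSpace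

namespace BAlgebra

noncomputable instance : AddCommGroup BAlgebra := inferInstanceAs (AddCommGroup BSpace)

noncomputable instance : Module ℂ BAlgebra := inferInstanceAs (Module ℂ BSpace)

noncomputable instance : Ring BAlgebra where
  __ : AddCommGroup BAlgebra := inferInstance
  mul := fun u v ↦ starB u v
  one := unitB
  left_distrib u := map_add (starB u)
  right_distrib := LinearMap.map_add₂ starB
  zero_mul := LinearMap.map_zero₂ starB
  mul_zero u := map_zero (starB u)
  mul_assoc := starB_assoc
  one_mul := unitB_starB
  mul_one := starB_unitB

noncomputable instance : Algebra ℂ BAlgebra :=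
  Algebra.ofModule (LinearMap.map_smul₂ starB) fun c u ↦ map_smul (starB u) c

noncomputable instance : Coalgebra ℂ BAlgebra where
  comul := deltaL
  counit := counitB
  coassoc := deltaL_coassoc
  rTensor_counit_comp_comul := LinearMap.ext fun u ↦
    (TensorProduct.lid ℂ BSpace).eq_symm_apply.2
      (LinearMap.congr_fun lid_comp_counitB_comp_deltaL u)
  lTensor_counit_comp_comul := LinearMap.ext fun u ↦
    (TensorProduct.rid ℂ BSpace).eq_symm_apply.2
      (LinearMap.congr_fun rid_comp_counitB_comp_deltaL u)

/-- The identity of `ℬ`, as a linear isomorphism between the two types. -/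
noncomputable def of : BSpace ≃ₗ[ℂ] BAlgebra := LinearEquiv.refl ℂ BSpace

theorem comul_of (u : BSpace) :
    Coalgebra.comul (R := ℂ) (of u) = TensorProduct.map of.toLinearMap of.toLinearMap (deltaL u) :=
  (LinearMap.congr_fun (TensorProduct.map_id (R := ℂ) (M := BSpace) (N := BSpace)) (deltaL u)).symm

theorem mul'_eq_muB : LinearMap.mul' ℂ BAlgebra = muB :=
  TensorProduct.ext' fun u v ↦ (muB_tmul u v).symm

variable {G : BD}

theorem convMul_of_mkB (f g : WithConv (BAlgebra →ₗ[ℂ] BAlgebra)) (hG : G.Valid) :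
    (f * g) (of (mkB G)) = ∑ I ∈ G.isolatedSets,
      f (of (mkB (G.sub I))) * g (of (mkB (G.sub (Icc 1 G.nv \ I)))) := by
  rw [LinearMap.convMul_apply, comul_of, deltaL_mkB hG]
  simp

theorem one_sub_id_of_unitB :
    (1 - toConv LinearMap.id : WithConv (BAlgebra →ₗ[ℂ] BAlgebra)) (of unitB) = 0 := by
  change counitB unitB • unitB - unitB = 0
  rw [counitB_unitB, one_smul, sub_self]

theorem one_sub_id_pow_of_mkB {n : ℕ} (hG : G.Valid) (hn : G.nv < n) :
    ((1 - toConv LinearMap.id : WithConv (BAlgebra →ₗ[ℂ] BAlgebra)) ^ n) (of (mkB G)) = 0 := by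
  induction n generalizing G with
  | zero => exact absurd hn (Nat.not_lt_zero _)
  | succ n ih =>
    rw [pow_succ, convMul_of_mkB _ _ hG]
    refine sum_eq_zero fun I hI ↦ ?_
    have hIN := (mem_isolatedSets.1 hI).1
    obtain rfl | hlt := hIN.eq_or_ssubset
    · rw [Finset.sdiff_self, sub_empty hG, mkB_eps, one_sub_id_of_unitB, mul_zero]
    · have hcard := card_lt_card hlt
      rw [← nv_sub hIN, Nat.card_Icc, Nat.add_sub_cancel] at hcard
      rw [ih (hG.sub hI) (by lia), zero_mul]

theorem isLocallyNilpotent_one_sub_id :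
    IsLocallyNilpotent (1 - toConv LinearMap.id : WithConv (BAlgebra →ₗ[ℂ] BAlgebra)) := by
  intro u
  obtain ⟨u, rfl⟩ := of.surjective u
  induction u using Finsupp.induction_linear with
  | zero => exact .of_forall fun n ↦ by rw [map_zero, map_zero]
  | add u v hu hv =>
    filter_upwards [hu, hv] with n hu hv
    rw [map_add, map_add, hu, hv, add_zero]
  | single A c =>
    filter_upwards [Filter.eventually_gt_atTop A.1.nv] with n hn
    rw [← mul_one c, ← smul_eq_mul, ← Finsupp.smul_single, ← mkB_of_valid A.2, map_smul, map_smul,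
      one_sub_id_pow_of_mkB A.2 hn, smul_zero]

theorem exists_antipode : ∃ S : BSpace →ₗ[ℂ] BSpace, ∀ u : BSpace,
    muB (TensorProduct.map S LinearMap.id (deltaL u)) = counitB u • unitB ∧
    muB (TensorProduct.map LinearMap.id S (deltaL u)) = counitB u • unitB := by
  have hunit := isLocallyNilpotent_one_sub_id.isUnit_one_sub
  rw [sub_sub_cancel, isUnit_iff_exists] at hunit
  obtain ⟨S, hr, hl⟩ := hunit
  -- The convolution product and its unit unfold to the two sides of the antipode identities.
  have hS {f : WithConv (BAlgebra →ₗ[ℂ] BAlgebra)} (hf : f = 1) (u : BSpace) :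
      f (of u) = of (counitB u • unitB) := hf ▸ rfl
  refine ⟨S.ofConv, fun u ↦ ?_⟩
  rw [← mul'_eq_muB]
  exact ⟨hS hl u, hS hr u⟩

end BAlgebra

end Antipode

end

/-- `(ℬ, ⋆, ε, Δ, ε*)` is a Hopf algebra: it is a bialgebra and
it admits an antipode `S`. -/
theorem bspace_hopf :
    (∀ u v w : BSpace, starB (starB u v) w = starB u (starB v w)) ∧
    (∀ u : BSpace, starB unitB u = u ∧ starB u unitB = u) ∧
    ((TensorProduct.assoc ℂ BSpace BSpace BSpace).toLinearMap ∘ₗ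
        TensorProduct.map deltaL LinearMap.id ∘ₗ deltaL =
      TensorProduct.map LinearMap.id deltaL ∘ₗ deltaL) ∧
    ((TensorProduct.lid ℂ BSpace).toLinearMap ∘ₗ
        TensorProduct.map counitB LinearMap.id ∘ₗ deltaL = LinearMap.id) ∧
    ((TensorProduct.rid ℂ BSpace).toLinearMap ∘ₗ
        TensorProduct.map LinearMap.id counitB ∘ₗ deltaL = LinearMap.id) ∧
    (∀ u v : BSpace, deltaL (starB u v) = star2 (deltaL u) (deltaL v)) ∧
    deltaL unitB = unitB ⊗ₜ[ℂ] unitB ∧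
    (∀ u v : BSpace, counitB (starB u v) = counitB u * counitB v) ∧
    counitB unitB = 1 ∧
    (∃ S : BSpace →ₗ[ℂ] BSpace, ∀ x : BSpace,
      muB (TensorProduct.map S LinearMap.id (deltaL x)) = counitB x • unitB ∧
      muB (TensorProduct.map LinearMap.id S (deltaL x)) = counitB x • unitB) := by
  exact ⟨starB_assoc, fun u ↦ ⟨unitB_starB u, starB_unitB u⟩, deltaL_coassoc,
    lid_comp_counitB_comp_deltaL, rid_comp_counitB_comp_deltaL, deltaL_starB, deltaL_unitB,
    counitB_starB, counitB_unitB, BAlgebra.exists_antipode⟩
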